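/- arXiv:2409.19997 — 4 statements merged into one kernel-verified Lean document; each statement's English description precedes it below -/
import Mathlib

section
/- Let f be C³, symmetric about L/2, f' > 0 on [0,L/2), f'' ≤ 0, f''(L/2) < 0. Uniformly in a ∈ [−1,1], Iₙ(L/2 + a/√n) ~ (f^{n−1}(L/2)/√n) · ∫_{−∞}^a exp(f''(L/2) h²/(2 f(L/2))) dh as n → ∞. -/
open MeasureTheory Filter Set Asymptotics Topology intervalIntegral Real

noncomputable section

/-- Second-order expansion at a nondegenerate critical point `c` that is the strict maximum of `f`
on a compact set `K`, with a continuous remainder coefficient bounded below on `K`. -/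
theorem exists_quadratic_coefficient {f : ℝ → ℝ} {c : ℝ} {K : Set ℝ} (hf : ContDiff ℝ 2 f)
    (hK : IsCompact K) (hcrit : deriv f c = 0) (hsec : deriv (deriv f) c < 0)
    (hmax : ∀ s ∈ K, s ≠ c → f s < f c) :
    ∃ q : ℝ → ℝ, ∃ δ : ℝ, 0 < δ ∧ Tendsto q (𝓝 c) (𝓝 (-deriv (deriv f) c / 2)) ∧
      (∀ s, f s = f c - q s * (s - c) ^ 2) ∧ ∀ s ∈ K, δ ≤ q s := by
  have hdf : Differentiable ℝ f := hf.differentiable (by norm_num)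
  have hddf : DifferentiableAt ℝ (deriv f) c :=
    ((contDiff_succ_iff_deriv (n := 1)).1 hf).2.2.differentiable (by norm_num) c
  set p : ℝ → ℝ := fun s => (f c - f s) / (s - c) ^ 2 with hp
  set q : ℝ → ℝ := Function.update p c (-deriv (deriv f) c / 2) with hq
  have hlim : Tendsto p (𝓝[≠] c) (𝓝 (-deriv (deriv f) c / 2)) := by
    refine HasDerivAt.lhopital_zero_nhdsNE (f' := fun s => -deriv f s)
      (g' := fun s => 2 * (s - c)) ?_ ?_ ?_ ?_ ?_ ?_
    · exact Eventually.of_forall fun s => (hdf s).hasDerivAt.const_sub _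
    · refine Eventually.of_forall fun s => ?_
      simpa using ((hasDerivAt_id' s).sub_const c).fun_pow 2
    · filter_upwards [self_mem_nhdsWithin] with s hs
      exact mul_ne_zero two_ne_zero (sub_ne_zero.2 hs)
    · have : Tendsto (fun s => f c - f s) (𝓝 c) (𝓝 (f c - f c)) :=
        (continuous_const.sub hdf.continuous).tendsto c
      rw [sub_self] at this
      exact this.mono_left nhdsWithin_le_nhds
    · have : Tendsto (fun s : ℝ => (s - c) ^ 2) (𝓝 c) (𝓝 ((c - c) ^ 2)) :=
        (by fun_prop : Continuous fun s : ℝ => (s - c) ^ 2).tendsto c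
      rw [sub_self, zero_pow two_ne_zero] at this
      exact this.mono_left nhdsWithin_le_nhds
    · have h := (hasDerivAt_iff_tendsto_slope.1 hddf.hasDerivAt).neg.div_const 2
      refine h.congr fun s => ?_
      rw [slope_def_field, hcrit]
      field_simp
      simp
  have hqc : ContinuousAt q c := continuousAt_update_same.2 hlim
  have hqc_val : q c = -deriv (deriv f) c / 2 := Function.update_self ..
  have hq_ne : ∀ s, s ≠ c → q s = p s := fun s hs => Function.update_of_ne hs ..
  have hqcont : Continuous q := by
    rw [continuous_iff_continuousAt]
    intro s
    rcases eq_or_ne s c with rfl | hs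
    · exact hqc
    · refine (continuousAt_update_of_ne hs).2 ?_
      exact (continuousAt_const.sub hdf.continuous.continuousAt).div (by fun_prop)
        (pow_ne_zero 2 (sub_ne_zero.2 hs))
  have hqpos : ∀ s ∈ K, 0 < q s := by
    intro s hs
    rcases eq_or_ne s c with rfl | hsc
    · rw [hqc_val]; linarith
    · rw [hq_ne s hsc]
      exact div_pos (sub_pos.2 (hmax s hs hsc)) (by have := sub_ne_zero.2 hsc; positivity)
  obtain ⟨δ, hδ, hle⟩ : ∃ δ : ℝ, 0 < δ ∧ ∀ s ∈ K, δ ≤ q s := by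
    rcases K.eq_empty_or_nonempty with rfl | hne
    · exact ⟨1, one_pos, by simp⟩
    · obtain ⟨x, hx, hmin⟩ := hK.exists_isMinOn hne hqcont.continuousOn
      exact ⟨q x, hqpos x hx, fun s hs => hmin hs⟩
  refine ⟨q, δ, hδ, hqc_val ▸ hqc, fun s => ?_, hle⟩
  rcases eq_or_ne s c with rfl | hs
  · simp
  · have := sub_ne_zero.2 hs
    rw [hq_ne s hs, hp]
    field_simp
    ring

theorem tendsto_rescaled_pow {f q : ℝ → ℝ} {c A : ℝ} (hM : 0 < f c)
    (hq : Tendsto q (𝓝 c) (𝓝 (-A / 2))) (hfq : ∀ s, f s = f c - q s * (s - c) ^ 2) (h : ℝ) :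
    Tendsto (fun n : ℕ => (f (c + h / √n) / f c) ^ (n - 1)) atTop
      (𝓝 (exp (A * h ^ 2 / (2 * f c)))) := by
  have hsqrt : Tendsto (fun n : ℕ => √(n : ℝ)) atTop atTop :=
    tendsto_sqrt_atTop.comp tendsto_natCast_atTop_atTop
  have hs : Tendsto (fun n : ℕ => c + h / √n) atTop (𝓝 c) := by
    simpa using (hsqrt.const_div_atTop h).const_add c
  have hqs := hq.comp hs
  set g : ℕ → ℝ := fun n => -(q (c + h / √n) * (h / √n) ^ 2 / f c) with hg
  have hfg : ∀ n : ℕ, f (c + h / √n) / f c = 1 + g n := by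
    intro n
    rw [hfq (c + h / √n), hg]
    field_simp
    ring
  have hng : Tendsto (fun n : ℕ => n * g n) atTop (𝓝 (A * h ^ 2 / (2 * f c))) := by
    have h1 : Tendsto (fun n : ℕ => -(q (c + h / √n) * h ^ 2 / f c)) atTop
        (𝓝 (-(-A / 2 * h ^ 2 / f c))) := ((hqs.mul_const _).div_const _).neg
    rw [show A * h ^ 2 / (2 * f c) = -(-A / 2 * h ^ 2 / f c) by field_simp]
    refine h1.congr' ?_
    filter_upwards [eventually_gt_atTop 0] with n hn
    have hn' : (0 : ℝ) < n := by exact_mod_cast hn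
    rw [hg]
    simp only [div_pow, sq_sqrt hn'.le]
    field_simp
  have hpow := tendsto_one_add_pow_exp_of_tendsto hng
  have hg0 : Tendsto (fun n => 1 + g n) atTop (𝓝 1) := by
    have h1 : Tendsto (fun n : ℕ => -(q (c + h / √n) * (h / √n) ^ 2 / f c)) atTop
        (𝓝 (-(-A / 2 * 0 ^ 2 / f c))) :=
      ((hqs.mul ((hsqrt.const_div_atTop h).pow 2)).div_const _).neg
    simpa using h1.const_add 1
  have hdiv := hpow.div hg0 one_ne_zero
  rw [div_one] at hdiv
  refine hdiv.congr' ?_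
  filter_upwards [eventually_gt_atTop 0, hg0.eventually_ne one_ne_zero] with n hn hne
  rw [hfg n]
  simp only [Pi.div_apply]
  rw [div_eq_iff hne, ← pow_succ, Nat.sub_add_cancel hn]

theorem rescaled_pow_le_exp {f q : ℝ → ℝ} {c δ : ℝ} {K : Set ℝ} (hM : 0 < f c) (hδ : 0 < δ)
    (hfq : ∀ s, f s = f c - q s * (s - c) ^ 2) (hqδ : ∀ s ∈ K, δ ≤ q s)
    (hnonneg : ∀ s ∈ K, 0 ≤ f s) {n : ℕ} (hn : 2 ≤ n) {h : ℝ} (hK : c + h / √n ∈ K) :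
    (f (c + h / √n) / f c) ^ (n - 1) ≤ exp (-(δ / (2 * f c)) * h ^ 2) := by
  have hn' : (2 : ℝ) ≤ n := by exact_mod_cast hn
  have hsq : (h / √n) ^ 2 = h ^ 2 / n := by rw [div_pow, sq_sqrt (by positivity)]
  have h1 : f (c + h / √n) / f c ≤ exp (-(δ / f c * (h ^ 2 / n))) := by
    refine le_trans ?_ (add_one_le_exp _)
    rw [div_le_iff₀ hM, hfq (c + h / √n), add_sub_cancel_left, hsq]
    have h2 : δ * (h ^ 2 / n) ≤ q (c + h / √n) * (h ^ 2 / n) :=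
      mul_le_mul_of_nonneg_right (hqδ _ hK) (by positivity)
    have h3 : (-(δ / f c * (h ^ 2 / n)) + 1) * f c = f c - δ * (h ^ 2 / n) := by
      field_simp
      ring
    linarith
  refine (pow_le_pow_left₀ (div_nonneg (hnonneg _ hK) hM.le) h1 _).trans ?_
  rw [← exp_nat_mul, exp_le_exp, Nat.cast_sub (by lia), Nat.cast_one]
  have h4 : 1 / 2 ≤ ((n : ℝ) - 1) / n := by
    rw [div_le_div_iff₀ two_pos (by positivity)]
    linarith
  have h5 : 0 ≤ δ / f c * h ^ 2 := by positivity
  have h6 := mul_le_mul_of_nonneg_left h4 h5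
  have h7 : ((n : ℝ) - 1) * -(δ / f c * (h ^ 2 / n)) = -(δ / f c * h ^ 2 * (((n : ℝ) - 1) / n)) := by
    ring
  have h8 : -(δ / (2 * f c)) * h ^ 2 = -(δ / f c * h ^ 2 * (1 / 2)) := by
    field_simp
  linarith

/-- Convergence in `L¹(Iic 1)` of the rescaled and truncated powers to the Gaussian. -/
theorem tendsto_integral_norm_rescaled_pow_sub_exp {f q : ℝ → ℝ} {c A δ : ℝ}
    (hf : Continuous f) (hc : 0 < c) (hM : 0 < f c) (hA : A < 0) (hδ : 0 < δ)
    (hq : Tendsto q (𝓝 c) (𝓝 (-A / 2))) (hfq : ∀ s, f s = f c - q s * (s - c) ^ 2)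
    (hqδ : ∀ s ∈ Icc 0 (2 * c), δ ≤ q s) (hnonneg : ∀ s ∈ Icc 0 (2 * c), 0 ≤ f s) :
    (∀ᶠ n : ℕ in atTop, IntegrableOn
      ((Ioi (-(c * √n))).indicator fun h => (f (c + h / √n) / f c) ^ (n - 1)) (Iic 1)) ∧
    Tendsto (fun n : ℕ => ∫ h in Iic (1 : ℝ),
      ‖(Ioi (-(c * √n))).indicator (fun h => (f (c + h / √n) / f c) ^ (n - 1)) h
        - exp (A * h ^ 2 / (2 * f c))‖) atTop (𝓝 0) := by
  have hsqrt : Tendsto (fun n : ℕ => √(n : ℝ)) atTop atTop :=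
    tendsto_sqrt_atTop.comp tendsto_natCast_atTop_atTop
  have hcsqrt : Tendsto (fun n : ℕ => c * √(n : ℝ)) atTop atTop := hsqrt.const_mul_atTop hc
  have hmeas : ∀ n : ℕ, Measurable
      ((Ioi (-(c * √n))).indicator fun h => (f (c + h / √n) / f c) ^ (n - 1)) := fun n =>
    Measurable.indicator (Continuous.measurable (by fun_prop)) measurableSet_Ioi
  have hexp : ∀ h : ℝ, exp (A * h ^ 2 / (2 * f c)) = exp (-(-A / (2 * f c)) * h ^ 2) := by
    intro h
    congr 1
    ring
  have hG : Integrable fun h : ℝ => exp (A * h ^ 2 / (2 * f c)) := by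
    simp_rw [hexp]
    exact integrable_exp_neg_mul_sq (div_pos (neg_pos.2 hA) (by positivity))
  have hB : Integrable fun h : ℝ => exp (-(δ / (2 * f c)) * h ^ 2) :=
    integrable_exp_neg_mul_sq (by positivity)
  have hbound : ∀ᶠ n : ℕ in atTop, ∀ h ∈ Iic (1 : ℝ),
      ‖(Ioi (-(c * √n))).indicator (fun h => (f (c + h / √n) / f c) ^ (n - 1)) h‖
        ≤ exp (-(δ / (2 * f c)) * h ^ 2) := by
    filter_upwards [eventually_ge_atTop 2, hcsqrt.eventually_ge_atTop 1] with n hn hcn h hh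
    by_cases hmem : h ∈ Ioi (-(c * √n))
    · have hn0 : 0 < √(n : ℝ) := sqrt_pos.2 (by positivity)
      have hK : c + h / √n ∈ Icc 0 (2 * c) := by
        have h1 : -c ≤ h / √n := by
          rw [le_div_iff₀ hn0]
          linarith [mem_Ioi.1 hmem]
        have h2 : h / √n ≤ c := by
          rw [div_le_iff₀ hn0]
          linarith [mem_Iic.1 hh]
        constructor <;> linarith
      rw [indicator_of_mem hmem, norm_of_nonneg (pow_nonneg (div_nonneg (hnonneg _ hK) hM.le) _)]
      exact rescaled_pow_le_exp hM hδ hfq hqδ hnonneg hn hK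
    · rw [indicator_of_notMem hmem, norm_zero]
      exact (exp_pos _).le
  constructor
  · filter_upwards [hbound] with n hn
    refine Integrable.mono' hB.integrableOn (hmeas n).aestronglyMeasurable ?_
    exact (ae_restrict_iff' measurableSet_Iic).2 (Eventually.of_forall hn)
  · rw [show (0 : ℝ) = ∫ h in Iic (1 : ℝ), (0 : ℝ) by simp]
    refine tendsto_integral_filter_of_dominated_convergence
      (fun h => exp (-(δ / (2 * f c)) * h ^ 2) + exp (A * h ^ 2 / (2 * f c))) ?_ ?_
      (hB.add hG).integrableOn ?_
    · exact Eventually.of_forall fun n =>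
        ((hmeas n).aestronglyMeasurable.sub hG.aestronglyMeasurable.restrict).norm
    · filter_upwards [hbound] with n hn
      refine (ae_restrict_iff' measurableSet_Iic).2 (Eventually.of_forall fun h hh => ?_)
      rw [norm_norm]
      refine (norm_sub_le _ _).trans (add_le_add (hn h hh) ?_)
      rw [norm_of_nonneg (exp_pos _).le]
    · refine Eventually.of_forall fun h => ?_
      have h1 : Tendsto (fun n : ℕ =>
          (Ioi (-(c * √n))).indicator (fun h => (f (c + h / √n) / f c) ^ (n - 1)) h) atTop
          (𝓝 (exp (A * h ^ 2 / (2 * f c)))) := by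
        refine (tendsto_rescaled_pow hM hq hfq h).congr' ?_
        filter_upwards [hcsqrt.eventually_gt_atTop (-h)] with n hn
        rw [indicator_of_mem (by rw [mem_Ioi]; linarith)]
      have h2 := (h1.sub_const (exp (A * h ^ 2 / (2 * f c)))).norm
      rwa [sub_self, norm_zero] at h2

theorem integral_pow_eq_rescaled {f : ℝ → ℝ} {c : ℝ} (hM : 0 < f c) {n : ℕ} (hn : 0 < n) {a : ℝ}
    (ha : -(c * √n) ≤ a) :
    ∫ s in (0 : ℝ)..(c + a / √n), f s ^ (n - 1) =
      f c ^ (n - 1) / √n * ∫ h in Iic a,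
        (Ioi (-(c * √n))).indicator (fun h => (f (c + h / √n) / f c) ^ (n - 1)) h := by
  have hn0 : √(n : ℝ) ≠ 0 := (sqrt_pos.2 (by exact_mod_cast hn)).ne'
  have hMn : f c ^ (n - 1) ≠ 0 := pow_ne_zero _ hM.ne'
  rw [setIntegral_indicator measurableSet_Ioi, inter_comm, Ioi_inter_Iic,
    ← intervalIntegral.integral_of_le ha]
  simp_rw [div_pow]
  rw [intervalIntegral.integral_div,
    intervalIntegral.integral_comp_add_div (fun s => f s ^ (n - 1)) hn0 c]
  rw [show c + -(c * √n) / √n = 0 by field_simp; ring, smul_eq_mul]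
  field_simp

/-- Uniformly in `a ∈ [-1,1]`,
`Iₙ(L/2 + a/√n) ~ (f^{n-1}(L/2)/√n) ∫_{-∞}^a exp(f''(L/2) h²/(2 f(L/2))) dh`. -/
theorem In_uniform_asymptotic
    (L : ℝ) (hL : 0 < L) (f : ℝ → ℝ)
    (hf : ContDiff ℝ 3 f)
    (hpos : ∀ s ∈ Set.Ioo 0 L, 0 < f s)
    (hasymp : Asymptotics.IsEquivalent (𝓝[>] (0:ℝ)) f id)
    (hsym : ∀ s, f (L - s) = f s)
    (hf' : ∀ s ∈ Set.Ico 0 (L / 2), 0 < deriv f s)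
    (hf'' : ∀ s ∈ Set.Icc 0 L, s ≠ L / 2 → deriv (deriv f) s ≤ 0)
    (hsec : deriv (deriv f) (L / 2) < 0)
    (I : ℕ → ℝ → ℝ)
    (hI : ∀ n r, I n r = ∫ s in (0:ℝ)..r, f s ^ (n - 1)) :
    ∀ ε : ℝ, 0 < ε → ∀ᶠ n : ℕ in atTop, ∀ a ∈ Set.Icc (-1:ℝ) 1,
      |I n (L / 2 + a / Real.sqrt n)
          - f (L / 2) ^ (n - 1) / Real.sqrt n *
              ∫ h in Set.Iic a, Real.exp (deriv (deriv f) (L / 2) * h ^ 2 / (2 * f (L / 2)))|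
        ≤ ε * (f (L / 2) ^ (n - 1) / Real.sqrt n *
              ∫ h in Set.Iic a, Real.exp (deriv (deriv f) (L / 2) * h ^ 2 / (2 * f (L / 2)))) := by
  have hc : 0 < L / 2 := half_pos hL
  have hM : 0 < f (L / 2) := hpos _ ⟨hc, half_lt_self hL⟩
  have hfc : Continuous f := hf.continuous
  have hnonneg : ∀ s ∈ Icc 0 L, 0 ≤ f s := by
    rw [← closure_Ioo hL.ne]
    exact closure_minimal (fun s hs => (hpos s hs).le) (isClosed_le continuous_const hfc)
  have hmono : StrictMonoOn f (Icc 0 (L / 2)) := by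
    refine strictMonoOn_of_deriv_pos (convex_Icc _ _) hfc.continuousOn fun s hs => ?_
    rw [interior_Icc] at hs
    exact hf' s ⟨hs.1.le, hs.2⟩
  have hleft : ∀ s ∈ Ico 0 (L / 2), f s < f (L / 2) := fun s hs =>
    hmono ⟨hs.1, hs.2.le⟩ ⟨hc.le, le_rfl⟩ hs.2
  have hmax : ∀ s ∈ Icc 0 L, s ≠ L / 2 → f s < f (L / 2) := by
    intro s hs hne
    rcases lt_or_gt_of_ne hne with h | h
    · exact hleft s ⟨hs.1, h⟩
    · rw [← hsym s]
      exact hleft _ ⟨by linarith [hs.2], by linarith⟩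
  have hcrit : deriv f (L / 2) = 0 := by
    refine IsLocalMax.deriv_eq_zero ?_
    filter_upwards [Icc_mem_nhds hc (half_lt_self hL)] with s hs
    rcases eq_or_ne s (L / 2) with rfl | hne
    · exact le_rfl
    · exact (hmax s hs hne).le
  obtain ⟨q, δ, hδ, hq, hfq, hqδ⟩ :=
    exists_quadratic_coefficient (hf.of_le (by norm_num)) isCompact_Icc hcrit hsec hmax
  have h2c : 2 * (L / 2) = L := by ring
  obtain ⟨hint, hlim⟩ := tendsto_integral_norm_rescaled_pow_sub_exp hfc hc hM hsec hδ hq hfq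
    (by rwa [h2c]) (by rwa [h2c])
  have hG : Integrable fun h : ℝ => exp (deriv (deriv f) (L / 2) * h ^ 2 / (2 * f (L / 2))) := by
    refine (integrable_exp_neg_mul_sq (b := -deriv (deriv f) (L / 2) / (2 * f (L / 2)))
      (div_pos (neg_pos.2 hsec) (by positivity))).congr (Eventually.of_forall fun h => ?_)
    simp only
    congr 1
    ring
  have hJmono : ∀ a ∈ Icc (-1 : ℝ) 1,
      ∫ h in Iic (-1 : ℝ), exp (deriv (deriv f) (L / 2) * h ^ 2 / (2 * f (L / 2))) ≤
        ∫ h in Iic a, exp (deriv (deriv f) (L / 2) * h ^ 2 / (2 * f (L / 2))) := fun a ha =>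
    setIntegral_mono_set hG.integrableOn (Eventually.of_forall fun h => (exp_pos _).le)
      (Iic_subset_Iic.2 ha.1).eventuallyLE
  have hJpos : 0 < ∫ h in Iic (-1 : ℝ),
      exp (deriv (deriv f) (L / 2) * h ^ 2 / (2 * f (L / 2))) := by
    have : NeZero (volume.restrict (Iic (-1 : ℝ))) := ⟨by simp⟩
    exact integral_exp_pos hG.integrableOn
  intro ε hε
  have hcsqrt : Tendsto (fun n : ℕ => L / 2 * √(n : ℝ)) atTop atTop :=
    (tendsto_sqrt_atTop.comp tendsto_natCast_atTop_atTop).const_mul_atTop hc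
  filter_upwards [hint, hlim.eventually_le_const (mul_pos hε hJpos), eventually_gt_atTop 0,
    hcsqrt.eventually_ge_atTop 1] with n hFn hsmall hn hcn a ha
  have hsub : Iic a ⊆ Iic (1 : ℝ) := Iic_subset_Iic.2 ha.2
  rw [hI, integral_pow_eq_rescaled hM hn (by linarith [ha.1]), ← mul_sub,
    ← integral_sub (hFn.mono_set hsub) hG.integrableOn, abs_mul, abs_of_nonneg (by positivity),
    mul_left_comm]
  refine mul_le_mul_of_nonneg_left ?_ (by positivity)
  calc _ ≤ ∫ h in Iic a, ‖_‖ := norm_integral_le_integral_norm _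
    _ ≤ ∫ h in Iic (1 : ℝ), ‖_‖ := setIntegral_mono_set (hFn.sub hG.integrableOn).norm
        (Eventually.of_forall fun h => norm_nonneg _) hsub.eventuallyLE
    _ ≤ _ := hsmall
    _ ≤ _ := mul_le_mul_of_nonneg_left (hJmono a ha) hε.le
end
end

section
/- Let f be C³ on [0,L], a weight function satisfying f(L−s)=f(s), f'>0 on [0,L/2), f''≤0, and f''(L/2)<0. Let τₙ be the hitting time of L by the diffusion with generator ∂² + bₙ ∂ started at 0, bₙ = (ln(Iₙ²/f^{n−1}))'. Then E[τₙ] = (f(L/2)/|f''(L/2)|)·(ln n)/n + O(√(ln n)/n) as n → ∞. -/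
open MeasureTheory Filter Set Asymptotics Topology intervalIntegral Real

noncomputable section

/-- A function that behaves like `b / (m (c - s))` up to distance `δ = 1 / √m` from `c`, and is
of order `δ` closer to `c`, has integral `b log (c / δ) / m + O(1 / m)`. -/
lemma abs_mul_integral_sub_log_le {g : ℝ → ℝ} {b c δ m C : ℝ} (hδ : 0 < δ) (hδc : δ < c)
    (hm : 0 < m) (hmδ : m * δ ^ 2 = 1) (hC : 0 ≤ C) (hg : ContinuousOn g (Ioc 0 c))
    (hfar : ∀ s ∈ Ioc 0 (c - δ), |m * g s - b / (c - s)| ≤ C + C / (m * (c - s) ^ 3))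
    (hnear : ∀ s ∈ Icc (c - δ) c, |g s| ≤ C * δ) :
    IntervalIntegrable g volume 0 c ∧
      |m * (∫ s in (0 : ℝ)..c, g s) - b * log (c / δ)| ≤ C * c + 2 * C := by
  have hd0 : 0 ≤ c - δ := by linarith
  have hc : 0 < c := hδ.trans hδc
  have hpos : ∀ s ∈ uIcc 0 (c - δ), 0 < c - s := by
    intro s hs
    rw [uIcc_of_le hd0] at hs
    linarith [hs.2]
  have hmain_int : IntervalIntegrable (fun s => b / (c - s)) volume 0 (c - δ) := by
    apply ContinuousOn.intervalIntegrable
    exact continuousOn_const.div (by fun_prop) fun s hs => (hpos s hs).ne'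
  have herr_int : IntervalIntegrable (fun s => C + C / (m * (c - s) ^ 3)) volume 0 (c - δ) := by
    apply ContinuousOn.intervalIntegrable
    refine continuousOn_const.add (continuousOn_const.div (by fun_prop) fun s hs => ?_)
    have := hpos s hs
    positivity
  have hmain : ∫ s in (0 : ℝ)..(c - δ), b / (c - s) = b * log (c / δ) := by
    rw [integral_eq_sub_of_hasDerivAt (f := fun s => -b * log (c - s)) _ hmain_int]
    · rw [log_div hc.ne' hδ.ne']
      simp only [sub_sub_cancel, sub_zero]
      ring
    · intro s hs
      have h := (((hasDerivAt_id' s).const_sub c).log (hpos s hs).ne').const_mul (-b)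
      exact h.congr_deriv (by ring)
  have herr : ∫ s in (0 : ℝ)..(c - δ), (C + C / (m * (c - s) ^ 3)) ≤ C * c + C := by
    have h : ∫ s in (0 : ℝ)..(c - δ), (C + C / (m * (c - s) ^ 3)) =
        (C * (c - δ) + C / (2 * m) * ((c - (c - δ)) ^ 2)⁻¹) -
          (C * 0 + C / (2 * m) * ((c - 0) ^ 2)⁻¹) := by
      apply integral_eq_sub_of_hasDerivAt
        (f := fun s => C * s + C / (2 * m) * ((c - s) ^ 2)⁻¹) _ herr_int
      intro s hs
      have hs' := hpos s hs
      have h := ((hasDerivAt_id' s).const_mul C).add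
        (((((hasDerivAt_id' s).const_sub c).fun_pow 2).fun_inv
          (pow_ne_zero 2 hs'.ne')).const_mul (C / (2 * m)))
      refine h.congr_deriv ?_
      norm_num
      field_simp
    rw [h]
    have h1 : C / (2 * m) * ((c - (c - δ)) ^ 2)⁻¹ = C / 2 := by
      rw [sub_sub_cancel, ← div_eq_mul_inv, div_div, mul_assoc, hmδ, mul_one]
    have h2 : 0 ≤ C / (2 * m) * ((c - 0) ^ 2)⁻¹ := by positivity
    rw [h1]
    nlinarith
  have hg_sub : ContinuousOn g (Ioc 0 (c - δ)) :=
    hg.mono (Ioc_subset_Ioc_right (by linarith))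
  have hdiff_int : IntervalIntegrable (fun s => m * g s - b / (c - s)) volume 0 (c - δ) := by
    refine herr_int.mono_fun' ?_ ?_
    · rw [uIoc_of_le hd0]
      refine ContinuousOn.aestronglyMeasurable ?_ measurableSet_Ioc
      refine (continuousOn_const.mul hg_sub).sub
        (continuousOn_const.div (by fun_prop) fun s hs => ?_)
      linarith [hs.2]
    · rw [uIoc_of_le hd0]
      exact (ae_restrict_mem measurableSet_Ioc).mono fun s hs => hfar s hs
  have hmg_int : IntervalIntegrable (fun s => m * g s) volume 0 (c - δ) := by
    simpa using hdiff_int.add hmain_int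
  have hg_int : IntervalIntegrable g volume 0 (c - δ) := by
    have h := hmg_int.const_mul m⁻¹
    simpa [← mul_assoc, inv_mul_cancel₀ hm.ne'] using h
  have hle : c - δ ≤ c := by linarith
  have hg_int' : IntervalIntegrable g volume (c - δ) c := by
    apply ContinuousOn.intervalIntegrable
    rw [uIcc_of_le hle]
    exact hg.mono fun s hs => ⟨by linarith [hs.1], hs.2⟩
  have hfar_le : |∫ s in (0 : ℝ)..(c - δ), (m * g s - b / (c - s))| ≤ C * c + C :=
    (intervalIntegral.norm_integral_le_of_norm_le (f := fun s => m * g s - b / (c - s)) hd0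
      (ae_of_all _ fun s hs => hfar s hs) herr_int).trans herr
  have hnear_le : |∫ s in (c - δ)..c, g s| ≤ C * δ * |c - (c - δ)| := by
    rw [← Real.norm_eq_abs]
    apply intervalIntegral.norm_integral_le_of_norm_le_const
    intro s hs
    rw [uIoc_of_le hle] at hs
    exact hnear s ⟨hs.1.le, hs.2⟩
  rw [sub_sub_cancel, abs_of_pos hδ] at hnear_le
  rw [integral_sub hmg_int hmain_int, hmain, intervalIntegral.integral_const_mul] at hfar_le
  refine ⟨hg_int.trans hg_int', ?_⟩
  rw [← integral_add_adjacent_intervals hg_int hg_int']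
  have hnear_le' : |m * ∫ s in (c - δ)..c, g s| ≤ C := by
    rw [abs_mul, abs_of_pos hm]
    calc m * |∫ s in (c - δ)..c, g s| ≤ m * (C * δ * δ) := by gcongr
      _ = C * (m * δ ^ 2) := by ring
      _ = C := by rw [hmδ, mul_one]
  rw [abs_le] at *
  constructor <;> nlinarith

/-- On the increasing half of a weight function, `f / deriv f` is `b / (c - s) + O(1)`, with derivative
`1 - f * deriv (deriv f) / deriv f ^ 2` of order at most `(c - s)⁻²`. -/
lemma exists_div_deriv_bounds {f : ℝ → ℝ} {c : ℝ} (hc : 0 < c) (hf : ContDiff ℝ 3 f)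
    (hcrit : deriv f c = 0) (hf' : ∀ s ∈ Ico 0 c, 0 < deriv f s)
    (hsec : deriv (deriv f) c < 0) :
    ∃ C, 0 ≤ C ∧ ∀ s ∈ Ico 0 c,
      |f s / deriv f s - f c / |deriv (deriv f) c| / (c - s)| ≤ C ∧
      |f s / deriv f s| ≤ C / (c - s) ∧
      1 - f s * deriv (deriv f) s / deriv f s ^ 2 ≤ C / (c - s) ^ 2 := by
  have hf1 : ContDiff ℝ 2 (deriv f) := ((contDiff_succ_iff_deriv (n := 2)).1 hf).2.2
  have hf2 : ContDiff ℝ 1 (deriv (deriv f)) := ((contDiff_succ_iff_deriv (n := 1)).1 hf1).2.2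
  have hf3 : Continuous (deriv (deriv (deriv f))) := hf2.continuous_deriv le_rfl
  have hd0 : Differentiable ℝ f := hf.differentiable (by norm_num)
  have hd1 : Differentiable ℝ (deriv f) := hf1.differentiable (by norm_num)
  have hd2 : Differentiable ℝ (deriv (deriv f)) := hf2.differentiable (by norm_num)
  have hcompact : IsCompact (Icc 0 c) := isCompact_Icc
  have hmemc : c ∈ Icc 0 c := ⟨hc.le, le_rfl⟩
  obtain ⟨K0, hK0⟩ := hcompact.exists_bound_of_continuousOn hd0.continuous.continuousOn
  obtain ⟨K1, hK1⟩ := hcompact.exists_bound_of_continuousOn hd1.continuous.continuousOn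
  obtain ⟨K2, hK2⟩ := hcompact.exists_bound_of_continuousOn hd2.continuous.continuousOn
  obtain ⟨K3, hK3⟩ := hcompact.exists_bound_of_continuousOn hf3.continuousOn
  simp only [Real.norm_eq_abs] at hK0 hK1 hK2 hK3
  have hK0n : 0 ≤ K0 := (abs_nonneg _).trans (hK0 c hmemc)
  have hK1n : 0 ≤ K1 := (abs_nonneg _).trans (hK1 c hmemc)
  have hK2n : 0 ≤ K2 := (abs_nonneg _).trans (hK2 c hmemc)
  have hK3n : 0 ≤ K3 := (abs_nonneg _).trans (hK3 c hmemc)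
  obtain ⟨κ, hκ, hκf⟩ : ∃ κ > 0, ∀ s ∈ Ico 0 c, κ * (c - s) ≤ deriv f s := by
    have hcont : Continuous (dslope (deriv f) c) := by
      rw [← continuousOn_univ, continuousOn_dslope univ_mem]
      exact ⟨hd1.continuous.continuousOn, hd1 c⟩
    obtain ⟨x, hx, hmax⟩ := hcompact.exists_isMaxOn ⟨c, hmemc⟩ hcont.continuousOn
    have hval : ∀ s ∈ Ico 0 c, dslope (deriv f) c s = -(deriv f s / (c - s)) := by
      intro s hs
      rw [dslope_of_ne _ hs.2.ne, slope_def_field, hcrit, sub_zero, ← div_neg, neg_sub]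
    refine ⟨-dslope (deriv f) c x, ?_, fun s hs => ?_⟩
    · rcases hx.2.eq_or_lt with h | h
      · rw [h, dslope_same]
        linarith
      · rw [hval x ⟨hx.1, h⟩, neg_neg]
        exact div_pos (hf' x ⟨hx.1, h⟩) (sub_pos.2 h)
    · have h : dslope (deriv f) c s ≤ dslope (deriv f) c x := hmax ⟨hs.1, hs.2.le⟩
      rw [hval s hs] at h
      rw [← le_div_iff₀ (sub_pos.2 hs.2)]
      linarith
  set d := |deriv (deriv f) c| with hd
  have hdpos : 0 < d := abs_pos.2 hsec.ne
  have hdeq : d = -deriv (deriv f) c := abs_of_neg hsec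
  have hmvt : ∀ (g : ℝ → ℝ) (K : ℝ), Differentiable ℝ g → ∀ s ∈ Ico 0 c,
      (∀ x ∈ Icc s c, |deriv g x| ≤ K) → |g s - g c| ≤ K * (c - s) := by
    intro g K hg s hs hK
    have h := (convex_Icc s c).norm_image_sub_le_of_norm_deriv_le (f := g) (C := K)
      (x := c) (y := s) (fun x _ => hg x) hK ⟨hs.2.le, le_rfl⟩ ⟨le_rfl, hs.2.le⟩
    rwa [Real.norm_eq_abs, Real.norm_eq_abs, abs_sub_comm s c,
      abs_of_pos (sub_pos.2 hs.2)] at h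
  have hsub : ∀ s ∈ Ico 0 c, Icc s c ⊆ Icc 0 c := fun s hs => Icc_subset_Icc_left hs.1
  have hE0 : ∀ s ∈ Ico 0 c, |f s - f c| ≤ K1 * (c - s) := fun s hs =>
    hmvt f K1 hd0 s hs fun x hx => hK1 x (hsub s hs hx)
  have hE2 : ∀ s ∈ Icc 0 c, |deriv (deriv f) s - deriv (deriv f) c| ≤ K3 * (c - s) := by
    intro s hs
    rcases hs.2.eq_or_lt with h | h
    · simp [h]
    · exact hmvt _ K3 hd2 s ⟨hs.1, h⟩ fun x hx => hK3 x (hsub s ⟨hs.1, h⟩ hx)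
  have hE1 : ∀ s ∈ Ico 0 c, |deriv f s - d * (c - s)| ≤ K3 * (c - s) * (c - s) := by
    intro s hs
    have hder : ∀ x, HasDerivAt (fun x => deriv f x - d * (c - x)) (deriv (deriv f) x + d) x := by
      intro x
      have h := (hd1 x).hasDerivAt.sub (((hasDerivAt_id' x).const_sub c).const_mul d)
      exact h.congr_deriv (by ring)
    have h := hmvt (fun x => deriv f x - d * (c - x)) (K3 * (c - s))
      (fun x => (hder x).differentiableAt) s hs ?_
    · simpa [hcrit] using h
    · intro x hx
      rw [(hder x).deriv, hdeq, ← sub_eq_add_neg]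
      refine (hE2 x (hsub s hs hx)).trans ?_
      have := hx.1
      gcongr
  refine ⟨(K1 * d + K0 * K3) / (κ * d) + K0 / κ + (c ^ 2 + K0 * K2 / κ ^ 2), by positivity, ?_⟩
  intro s hs
  have hu : 0 < c - s := sub_pos.2 hs.2
  have huc : c - s ≤ c := by linarith [hs.1]
  have hD := hf' s hs
  have hκs := hκf s hs
  have hs' : s ∈ Icc 0 c := ⟨hs.1, hs.2.le⟩
  refine ⟨?_, ?_, ?_⟩
  · have heq : f s / deriv f s - f c / d / (c - s) =
        ((f s - f c) * (d * (c - s)) - f c * (deriv f s - d * (c - s))) /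
          (deriv f s * (d * (c - s))) := by
      field_simp
      ring
    have hnum : |(f s - f c) * (d * (c - s)) - f c * (deriv f s - d * (c - s))| ≤
        (K1 * d + K0 * K3) * (c - s) ^ 2 := by
      refine (abs_sub _ _).trans ?_
      rw [abs_mul, abs_mul (f c), abs_of_pos (mul_pos hdpos hu)]
      calc _ ≤ K1 * (c - s) * (d * (c - s)) + K0 * (K3 * (c - s) * (c - s)) := by
            gcongr
            · exact hE0 s hs
            · exact hK0 c hmemc
            · exact hE1 s hs
        _ = _ := by ring
    have h1 : |f s / deriv f s - f c / d / (c - s)| ≤ (K1 * d + K0 * K3) / (κ * d) := by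
      rw [heq, abs_div, abs_of_pos (mul_pos hD (mul_pos hdpos hu))]
      calc _ ≤ (K1 * d + K0 * K3) * (c - s) ^ 2 / (κ * (c - s) * (d * (c - s))) := by gcongr
        _ = _ := by field_simp
    have : 0 ≤ K0 / κ + (c ^ 2 + K0 * K2 / κ ^ 2) := by positivity
    linarith
  · rw [abs_div, abs_of_pos hD]
    calc |f s| / deriv f s ≤ K0 / (κ * (c - s)) := by gcongr; exact hK0 s hs'
      _ = K0 / κ / (c - s) := by rw [div_div]
      _ ≤ _ := by
        gcongr
        have : 0 ≤ (K1 * d + K0 * K3) / (κ * d) := by positivity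
        have : 0 ≤ c ^ 2 + K0 * K2 / κ ^ 2 := by positivity
        linarith
  · have h1 : -(f s * deriv (deriv f) s / deriv f s ^ 2) ≤ K0 * K2 / κ ^ 2 / (c - s) ^ 2 := by
      refine (neg_le_abs _).trans ?_
      rw [abs_div, abs_mul, abs_of_pos (pow_pos hD 2), div_div, ← mul_pow]
      gcongr
      · exact hK0 s hs'
      · exact hK2 s hs'
    have h2 : (1 : ℝ) ≤ c ^ 2 / (c - s) ^ 2 := by
      rw [one_le_div (by positivity)]
      gcongr
    have h3 : 0 ≤ ((K1 * d + K0 * K3) / (κ * d) + K0 / κ) / (c - s) ^ 2 := by positivity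
    rw [add_div, add_div (c ^ 2)]
    linarith

/-- Two-sided comparison of the integral of `f ^ k` with its Laplace-type approximation. -/
lemma integral_pow_bounds {f : ℝ → ℝ} {s A : ℝ} {k : ℕ} (hk : 1 ≤ k) (hf : ContDiff ℝ 2 f)
    (h0 : f 0 = 0) (hs : 0 ≤ s) (hpos : ∀ t ∈ Icc 0 s, 0 ≤ f t)
    (hf' : ∀ t ∈ Icc 0 s, 0 < deriv f t) (hf'' : ∀ t ∈ Icc 0 s, deriv (deriv f) t ≤ 0)
    (hA : ∀ t ∈ Icc 0 s, 1 - f t * deriv (deriv f) t / deriv f t ^ 2 ≤ A) :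
    k * (∫ t in (0 : ℝ)..s, f t ^ k) ≤ f s / deriv f s * f s ^ k ∧
      f s / deriv f s * f s ^ k ≤ (k + A) * ∫ t in (0 : ℝ)..s, f t ^ k := by
  have hf1 : ContDiff ℝ 1 (deriv f) := ((contDiff_succ_iff_deriv (n := 1)).1 hf).2.2
  have hd0 : Differentiable ℝ f := hf.differentiable (by norm_num)
  have hd1 : Differentiable ℝ (deriv f) := hf1.differentiable (by norm_num)
  have hc0 := hd0.continuous
  have hc1 := hd1.continuous
  have hc2 : Continuous (deriv (deriv f)) := hf1.continuous_deriv le_rfl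
  obtain ⟨j, rfl⟩ : ∃ j, k = j + 1 := ⟨k - 1, by omega⟩
  have hint : IntervalIntegrable
      (fun t => (1 - f t * deriv (deriv f) t / deriv f t ^ 2 + (j + 1 : ℕ)) * f t ^ (j + 1))
      volume 0 s := by
    apply ContinuousOn.intervalIntegrable
    rw [uIcc_of_le hs]
    refine ContinuousOn.mul (ContinuousOn.add (continuousOn_const.sub
      (ContinuousOn.div (by fun_prop) (by fun_prop) fun t ht => ?_)) continuousOn_const)
      (by fun_prop)
    exact pow_ne_zero 2 (hf' t ht).ne'
  have hint' : ∀ B : ℝ, IntervalIntegrable (fun t => B * f t ^ (j + 1)) volume 0 s := fun B =>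
    (by fun_prop : Continuous fun t => B * f t ^ (j + 1)).intervalIntegrable _ _
  have hFTC : ∫ t in (0 : ℝ)..s,
      (1 - f t * deriv (deriv f) t / deriv f t ^ 2 + (j + 1 : ℕ)) * f t ^ (j + 1) =
        f s / deriv f s * f s ^ (j + 1) := by
    rw [integral_eq_sub_of_hasDerivAt (f := fun t => f t / deriv f t * f t ^ (j + 1)) _ hint]
    · simp [h0]
    · intro t ht
      rw [uIcc_of_le hs] at ht
      have hD := (hf' t ht).ne'
      have h := ((hd0 t).hasDerivAt.fun_div (hd1 t).hasDerivAt hD).fun_mul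
        ((hd0 t).hasDerivAt.fun_pow (j + 1))
      refine h.congr_deriv ?_
      rw [Nat.add_sub_cancel]
      field_simp
      ring
  rw [← hFTC, ← intervalIntegral.integral_const_mul, ← intervalIntegral.integral_const_mul]
  constructor
  · refine integral_mono_on hs (hint' _) hint fun t ht => ?_
    have hp := hpos t ht
    have : f t * deriv (deriv f) t / deriv f t ^ 2 ≤ 0 :=
      div_nonpos_of_nonpos_of_nonneg (mul_nonpos_of_nonneg_of_nonpos hp (hf'' t ht))
        (sq_nonneg _)
    gcongr
    linarith
  · refine integral_mono_on hs hint (hint' _) fun t ht => ?_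
    have hp := hpos t ht
    have := hA t ht
    gcongr ?_ * _
    linarith

lemma abs_mul_div_mul_sub_le {P S T u b m C φ : ℝ} (hP : 0 < P) (hS : 0 ≤ S) (hu : 0 < u)
    (hm : 0 < m) (hC : 0 ≤ C) (hle : m * S ≤ φ * P) (hge : φ * P ≤ (m + C / u ^ 2) * S)
    (hT : u * P ≤ T - S) (hφ : |φ - b / u| ≤ C) (hφ' : φ ≤ C / u) :
    |m * (S / P * ((T - S) / T)) - b / u| ≤ C + 2 * C ^ 2 / (m * u ^ 3) := by
  have huP : 0 < u * P := mul_pos hu hP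
  have hT0 : 0 < T := by linarith
  set κ := m * S / P with hκ
  have hκ0 : 0 ≤ κ := by positivity
  have hκφ : κ ≤ φ := by rwa [hκ, div_le_iff₀ hP]
  have hφκ : φ ≤ κ + κ * (C / (m * u ^ 2)) := by
    have h : φ ≤ (m + C / u ^ 2) * S / P := by rwa [le_div_iff₀ hP]
    convert h using 1
    rw [hκ]
    field_simp
  have hr0 : 0 ≤ S / T := by positivity
  have hr : S / T ≤ C / (m * u ^ 2) := by
    calc S / T ≤ S / (u * P) := by gcongr; linarith
      _ = κ / (m * u) := by rw [hκ]; field_simp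
      _ ≤ C / u / (m * u) := by gcongr; exact hκφ.trans hφ'
      _ = C / (m * u ^ 2) := by field_simp
  have hx : κ * (C / (m * u ^ 2)) ≤ C ^ 2 / (m * u ^ 3) := by
    calc κ * (C / (m * u ^ 2)) ≤ C / u * (C / (m * u ^ 2)) := by
          gcongr
          exact hκφ.trans hφ'
      _ = C ^ 2 / (m * u ^ 3) := by field_simp
  have heq : m * (S / P * ((T - S) / T)) = κ - κ * (S / T) := by
    rw [hκ]
    field_simp
  have h1 : κ * (S / T) ≤ κ * (C / (m * u ^ 2)) := by gcongr
  have h2 : 0 ≤ κ * (S / T) := by positivity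
  have h3 : 2 * C ^ 2 / (m * u ^ 3) = 2 * (C ^ 2 / (m * u ^ 3)) := by ring
  have h4 : 0 ≤ C ^ 2 / (m * u ^ 3) := by positivity
  rw [heq, h3]
  rw [abs_le] at *
  constructor <;> linarith

/-- The mean hitting time is `b log k / k + O(1 / k)`, where `k = n - 1` and
`b = f (L / 2) / |f'' (L / 2)|`. -/
lemma exists_abs_mul_mean_sub_log_le {f : ℝ → ℝ} {L : ℝ} (hL : 0 < L) (hf : ContDiff ℝ 3 f)
    (h0 : f 0 = 0) (hpos : ∀ s ∈ Ioo 0 L, 0 < f s) (hsym : ∀ s, f (L - s) = f s)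
    (hf' : ∀ s ∈ Ico 0 (L / 2), 0 < deriv f s)
    (hf'' : ∀ s ∈ Ico 0 (L / 2), deriv (deriv f) s ≤ 0)
    (hsec : deriv (deriv f) (L / 2) < 0) :
    ∃ E, ∀ k : ℕ, 1 ≤ k → 1 < k * (L / 2) ^ 2 →
      |k * (∫ s in (0 : ℝ)..L, (∫ t in (0 : ℝ)..s, f t ^ k) / f s ^ k *
        (((∫ t in (0 : ℝ)..L, f t ^ k) - ∫ t in (0 : ℝ)..s, f t ^ k) /
          ∫ t in (0 : ℝ)..L, f t ^ k)) -
        f (L / 2) / |deriv (deriv f) (L / 2)| * log k| ≤ E := by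
  have hcrit : deriv f (L / 2) = 0 := by
    have h := deriv_comp_const_sub (f := f) L (L / 2)
    simp only [hsym, sub_half] at h
    linarith
  have hcont : Continuous f := hf.continuous
  have hLc : L / 2 + L / 2 = L := add_halves L
  set c := L / 2 with hc_def
  have hc : 0 < c := half_pos hL
  obtain ⟨C, hC, hbd⟩ := exists_div_deriv_bounds hc hf hcrit hf' hsec
  set b := f c / |deriv (deriv f) c| with hb
  set D := C + 2 * C ^ 2 + 1 with hD
  have hD0 : 0 ≤ D := by positivity
  have hposc : ∀ s ∈ Ioc 0 c, 0 < f s := fun s hs => hpos s ⟨hs.1, by linarith [hs.2]⟩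
  have hnonneg : ∀ s ∈ Icc 0 c, 0 ≤ f s := by
    intro s hs
    rcases hs.1.eq_or_lt with h | h
    · rw [← h, h0]
    · exact (hposc s ⟨h, hs.2⟩).le
  have hmono : MonotoneOn f (Icc 0 c) := by
    refine monotoneOn_of_deriv_nonneg (convex_Icc 0 c) hcont.continuousOn
      (hf.differentiable (by norm_num)).differentiableOn fun x hx => ?_
    rw [interior_Icc] at hx
    exact (hf' x ⟨hx.1.le, hx.2⟩).le
  refine ⟨2 * (D * c + 2 * D) + 2 * |b * log c|, fun k hk hkc => ?_⟩
  have hk0 : (0 : ℝ) < k := by exact_mod_cast hk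
  have hint : ∀ x y, IntervalIntegrable (fun t => f t ^ k) volume x y := fun x y =>
    (hcont.pow k).intervalIntegrable x y
  set I : ℝ → ℝ := fun s => ∫ t in (0 : ℝ)..s, f t ^ k with hI
  have hIcont : Continuous I := continuous_primitive hint 0
  have hIsub : ∀ x y, I y - I x = ∫ t in x..y, f t ^ k := fun x y =>
    integral_interval_sub_left (hint 0 y) (hint 0 x)
  have hIsym : ∀ s, I (L - s) = I L - I s := by
    intro s
    rw [hIsub s L, hI]
    have h := integral_comp_sub_left (a := s) (b := L) (fun t => f t ^ k) L
    simp only [hsym, sub_self] at h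
    exact h.symm
  set g : ℝ → ℝ := fun s => I s / f s ^ k * ((I L - I s) / I L) with hg
  have hgsym : ∀ s, g (L - s) = g s := by
    intro s
    simp only [hg, hIsym, hsym, sub_sub_cancel]
    ring
  have hInonneg : ∀ s ∈ Icc 0 c, 0 ≤ I s := fun s hs =>
    integral_nonneg hs.1 fun t ht => pow_nonneg (hnonneg t ⟨ht.1, ht.2.trans hs.2⟩) k
  have hIstep : ∀ x y, 0 ≤ x → x ≤ y → y ≤ c →
      (y - x) * f x ^ k ≤ I y - I x ∧ I y - I x ≤ (y - x) * f y ^ k := by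
    intro x y hx hxy hyc
    rw [hIsub, ← smul_eq_mul, ← smul_eq_mul, ← intervalIntegral.integral_const,
      ← intervalIntegral.integral_const]
    have hmem : ∀ t ∈ Icc x y, t ∈ Icc 0 c := fun t ht => ⟨hx.trans ht.1, ht.2.trans hyc⟩
    constructor
    · refine integral_mono_on hxy (by simp) (hint x y) fun t ht => ?_
      have h1 := hnonneg x ⟨hx, hxy.trans hyc⟩
      gcongr
      exact hmono ⟨hx, hxy.trans hyc⟩ (hmem t ht) ht.1
    · refine integral_mono_on hxy (hint x y) (by simp) fun t ht => ?_
      have h1 := hnonneg t (hmem t ht)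
      gcongr
      exact hmono (hmem t ht) ⟨hx.trans hxy, hyc⟩ ht.2
  have hIc : I L - I c = I c := by
    rw [← hIsym]
    congr 1
    linarith
  have hIL : ∀ s ∈ Icc 0 c, (c - s) * f s ^ k ≤ I L - I s := by
    intro s hs
    have h := (hIstep s c hs.1 hs.2 le_rfl).1
    linarith [hInonneg c ⟨hc.le, le_rfl⟩]
  have hILpos : 0 < I L := by
    have hmid : c / 2 ∈ Ioc 0 c := ⟨by linarith, by linarith⟩
    have h := hIL (c / 2) ⟨hmid.1.le, hmid.2⟩
    have h1 := hInonneg (c / 2) ⟨hmid.1.le, hmid.2⟩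
    have h2 : 0 < (c - c / 2) * f (c / 2) ^ k :=
      mul_pos (by linarith) (pow_pos (hposc _ hmid) k)
    linarith
  have hlap : ∀ s ∈ Ico 0 c, k * I s ≤ f s / deriv f s * f s ^ k ∧
      f s / deriv f s * f s ^ k ≤ (k + C / (c - s) ^ 2) * I s := by
    intro s hs
    have hmem : ∀ t ∈ Icc 0 s, t ∈ Ico 0 c := fun t ht => ⟨ht.1, ht.2.trans_lt hs.2⟩
    refine integral_pow_bounds hk (hf.of_le (by norm_num)) h0 hs.1
      (fun t ht => hnonneg t ⟨ht.1, (hmem t ht).2.le⟩) (fun t ht => hf' t (hmem t ht))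
      (fun t ht => hf'' t (hmem t ht)) fun t ht => ((hbd t (hmem t ht)).2.2).trans ?_
    have h1 : 0 < c - s := sub_pos.2 hs.2
    gcongr
    exact ht.2
  set δ := (√(k : ℝ))⁻¹ with hδ_def
  have hδ : 0 < δ := by positivity
  have hkδ : (k : ℝ) * δ ^ 2 = 1 := by
    rw [hδ_def, inv_pow, sq_sqrt hk0.le, mul_inv_cancel₀ hk0.ne']
  have hδc : δ < c := by
    refine lt_of_pow_lt_pow_left₀ 2 hc.le (lt_of_mul_lt_mul_left ?_ hk0.le)
    rwa [hkδ]
  have hgcont : ContinuousOn g (Ioc 0 c) :=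
    (hIcont.continuousOn.div (hcont.pow k).continuousOn
      fun s hs => (pow_pos (hposc s hs) k).ne').mul
      ((continuousOn_const.sub hIcont.continuousOn).div_const _)
  have hfar : ∀ s ∈ Ioc 0 (c - δ), |k * g s - b / (c - s)| ≤ D + D / (k * (c - s) ^ 3) := by
    intro s hs
    have hs' : s ∈ Ico 0 c := ⟨hs.1.le, by linarith [hs.2]⟩
    have hsc : s ∈ Icc 0 c := ⟨hs'.1, hs'.2.le⟩
    have hu : 0 < c - s := sub_pos.2 hs'.2
    obtain ⟨h1, h2, -⟩ := hbd s hs'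
    refine (abs_mul_div_mul_sub_le (pow_pos (hposc s ⟨hs.1, hsc.2⟩) k) (hInonneg s hsc) hu hk0
      hC (hlap s hs').1 (hlap s hs').2 (hIL s hsc) h1 ((le_abs_self _).trans h2)).trans ?_
    gcongr
    · nlinarith [sq_nonneg C]
    · linarith
  have hnear : ∀ s ∈ Icc (c - δ) c, |g s| ≤ D * δ := by
    intro s hs
    have ha : c - δ ∈ Ico 0 c := ⟨by linarith, by linarith⟩
    have hsc : s ∈ Icc 0 c := ⟨ha.1.trans hs.1, hs.2⟩
    have hs0 : s ∈ Ioc 0 c := ⟨(sub_pos.2 hδc).trans_le hs.1, hs.2⟩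
    have hP : 0 < f s ^ k := pow_pos (hposc s hs0) k
    have hfa := hnonneg (c - δ) ⟨ha.1, ha.2.le⟩
    have hfle : f (c - δ) ^ k ≤ f s ^ k := by
      gcongr
      exact hmono ⟨ha.1, ha.2.le⟩ hsc hs.1
    have hIa : I (c - δ) ≤ C * δ * f s ^ k := by
      have h := (hbd (c - δ) ha).2.1
      rw [sub_sub_cancel] at h
      refine le_of_mul_le_mul_left ?_ hk0
      calc k * I (c - δ) ≤ f (c - δ) / deriv f (c - δ) * f (c - δ) ^ k := (hlap _ ha).1
        _ ≤ C / δ * f s ^ k :=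
          mul_le_mul ((le_abs_self _).trans h) hfle (pow_nonneg hfa k) (by positivity)
        _ = k * δ ^ 2 * (C / δ * f s ^ k) := by rw [hkδ, one_mul]
        _ = k * (C * δ * f s ^ k) := by field_simp
    have hIs : I s ≤ D * δ * f s ^ k := by
      have h := (hIstep (c - δ) s ha.1 hs.1 hs.2).2
      have h2 : (s - (c - δ)) * f s ^ k ≤ δ * f s ^ k := by
        gcongr
        linarith [hs.2]
      have h3 : 0 ≤ 2 * C ^ 2 * (δ * f s ^ k) := by positivity
      rw [hD]
      nlinarith
    have hI0 := hInonneg s hsc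
    have hq0 : 0 ≤ (I L - I s) / I L := by
      have h := hIL s hsc
      have : 0 ≤ (c - s) * f s ^ k := mul_nonneg (sub_nonneg.2 hs.2) hP.le
      exact div_nonneg (by linarith) hILpos.le
    have hq1 : (I L - I s) / I L ≤ 1 := by
      rw [div_le_one hILpos]
      linarith
    rw [hg, abs_of_nonneg (mul_nonneg (div_nonneg hI0 hP.le) hq0)]
    calc I s / f s ^ k * ((I L - I s) / I L) ≤ D * δ * 1 := by
          gcongr
          rwa [div_le_iff₀ hP]
      _ = D * δ := mul_one _
  obtain ⟨hgint, hhalf⟩ := abs_mul_integral_sub_log_le hδ hδc hk0 hkδ hD0 hgcont hfar hnear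
  have hfold : ∫ s in (0 : ℝ)..L, g s = 2 * ∫ s in (0 : ℝ)..c, g s := by
    have h := integral_comp_sub_left (a := 0) (b := c) g L
    have hLsub : L - c = c := by linarith
    simp only [hgsym, hLsub, sub_zero] at h
    have hgint' : IntervalIntegrable g volume c L := by
      have h := hgint.comp_sub_left L
      simp only [hgsym, hLsub, sub_zero] at h
      exact h.symm
    rw [← integral_add_adjacent_intervals hgint hgint', ← h]
    ring
  have hlog : log (c / δ) = log c + log k / 2 := by
    rw [hδ_def, div_inv_eq_mul, log_mul hc.ne' (by positivity), log_sqrt hk0.le]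
  change |k * (∫ s in (0 : ℝ)..L, g s) - b * log k| ≤ _
  rw [hlog] at hhalf
  rw [hfold]
  have heq : k * (2 * ∫ s in (0 : ℝ)..c, g s) - b * log k =
      2 * (k * (∫ s in (0 : ℝ)..c, g s) - b * (log c + log k / 2)) + 2 * (b * log c) := by ring
  rw [heq]
  refine (abs_add_le _ _).trans ?_
  rw [abs_mul, abs_mul 2 (b * log c), abs_two]
  linarith

/-- Replacing `k` by `k + 1` changes `log k / k` by at most `1 / (k + 1)`. -/
lemma abs_log_div_sub_log_div_succ_le {k : ℝ} (hk : 1 ≤ k) :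
    |log k / k - log (k + 1) / (k + 1)| ≤ 1 / (k + 1) := by
  have hk0 : 0 < k := by linarith
  have hlog0 : 0 ≤ log k := log_nonneg hk
  have hlog1 : log k ≤ k := (log_le_sub_one_of_pos hk0).trans (by linarith)
  have hmono : log k ≤ log (k + 1) := log_le_log hk0 (by linarith)
  have hstep : log (k + 1) - log k ≤ 1 := by
    rw [← log_div (by linarith) hk0.ne']
    refine (log_le_sub_one_of_pos (by positivity)).trans ?_
    rw [sub_le_iff_le_add, div_le_iff₀ hk0]
    linarith
  have heq : log k / k - log (k + 1) / (k + 1) =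
      (log k / k - (log (k + 1) - log k)) / (k + 1) := by
    field_simp
    ring
  have h1 : log k / k ≤ 1 := (div_le_one hk0).2 hlog1
  have h2 : 0 ≤ log k / k := by positivity
  rw [heq, abs_div, abs_of_pos (by linarith : 0 < k + 1)]
  gcongr
  rw [abs_le]
  constructor <;> linarith

/-- `E[τₙ] = (f(L/2)/|f''(L/2)|) (ln n)/n + O(√(ln n)/n)`, where `τₙ` is the hitting
time of `L` by the dual diffusion started at `0`, whose mean is given by the explicit
integral formula. -/
theorem mean_asymptotic
    (L : ℝ) (hL : 0 < L) (f : ℝ → ℝ)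
    (hf : ContDiff ℝ 3 f)
    (hpos : ∀ s ∈ Set.Ioo 0 L, 0 < f s)
    (hasymp : Asymptotics.IsEquivalent (𝓝[>] (0:ℝ)) f id)
    (hsym : ∀ s, f (L - s) = f s)
    (hf' : ∀ s ∈ Set.Ico 0 (L / 2), 0 < deriv f s)
    (hf'' : ∀ s ∈ Set.Icc 0 L, s ≠ L / 2 → deriv (deriv f) s ≤ 0)
    (hsec : deriv (deriv f) (L / 2) < 0)
    (I : ℕ → ℝ → ℝ)
    (hI : ∀ n r, I n r = ∫ s in (0:ℝ)..r, f s ^ (n - 1))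
    {Ω : ℕ → Type*} [∀ n, MeasureSpace (Ω n)]
    [∀ n, IsProbabilityMeasure (volume : Measure (Ω n))]
    (τ : ∀ n, Ω n → ℝ)
    (hE : ∀ n, 2 ≤ n →
      (∫ ω, τ n ω) = ∫ s in (0:ℝ)..L, I n s / f s ^ (n - 1) * ((I n L - I n s) / I n L)) :
    (fun n : ℕ => (∫ ω, τ n ω)
        - f (L / 2) / |deriv (deriv f) (L / 2)| * (Real.log n / n))
      =O[atTop] (fun n : ℕ => Real.sqrt (Real.log n) / n) := by
  have h0 : f 0 = 0 := by
    have h1 : Tendsto f (𝓝[>] 0) (𝓝 (0 : ℝ)) :=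
      hasymp.symm.tendsto_nhds (tendsto_id.mono_left nhdsWithin_le_nhds)
    have h2 : Tendsto f (𝓝[>] 0) (𝓝 (f 0)) :=
      hf.continuous.continuousAt.tendsto.mono_left nhdsWithin_le_nhds
    exact tendsto_nhds_unique h2 h1
  obtain ⟨E, hEb⟩ := exists_abs_mul_mean_sub_log_le hL hf h0 hpos hsym hf'
    (fun s hs => hf'' s ⟨hs.1, by linarith [hs.2]⟩ hs.2.ne) hsec
  set b := f (L / 2) / |deriv (deriv f) (L / 2)|
  have hlarge : ∀ᶠ k : ℕ in atTop, 1 < (k : ℝ) * (L / 2) ^ 2 :=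
    (tendsto_natCast_atTop_atTop.atTop_mul_const (by positivity)).eventually_gt_atTop 1
  refine IsBigO.of_bound (2 * |E| + |b|) ?_
  filter_upwards [(tendsto_sub_atTop_nat 1).eventually hlarge, eventually_ge_atTop 3] with n hn hn3
  obtain ⟨k, rfl⟩ : ∃ k, n = k + 1 := ⟨n - 1, by omega⟩
  have hk2 : 2 ≤ k := by omega
  rw [Nat.add_sub_cancel] at hn
  have hmean := hEb k (by omega) hn
  have hτ := hE (k + 1) (by omega)
  simp only [hI, Nat.add_sub_cancel] at hτ
  rw [← hτ] at hmean
  set x := ∫ ω, τ (k + 1) ω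
  have hkr : (2 : ℝ) ≤ k := by exact_mod_cast hk2
  have hk0 : (0 : ℝ) < k := by linarith
  have hx : |x - b * (log k / k)| ≤ 2 * |E| / (k + 1) := by
    have heq : x - b * (log k / k) = (k * x - b * log k) / k := by field_simp
    rw [heq, abs_div, abs_of_pos hk0, div_le_div_iff₀ hk0 (by linarith)]
    have h1 : |k * x - b * log k| ≤ |E| := hmean.trans (le_abs_self E)
    nlinarith [abs_nonneg E]
  have hshift := abs_log_div_sub_log_div_succ_le (k := k) (by linarith)
  have hsqrt : 1 ≤ √(log (k + 1)) := by
    rw [one_le_sqrt, le_log_iff_exp_le (by linarith)]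
    linarith [exp_one_lt_three]
  push_cast
  rw [Real.norm_eq_abs, Real.norm_eq_abs,
    abs_of_nonneg (by positivity : 0 ≤ √(log ((k : ℝ) + 1)) / (k + 1))]
  calc |x - b * (log (k + 1) / (k + 1))|
      = |(x - b * (log k / k)) + b * (log k / k - log (k + 1) / (k + 1))| := by
        congr 1
        ring
    _ ≤ 2 * |E| / (k + 1) + |b| * (1 / (k + 1)) := by
        refine (abs_add_le _ _).trans ?_
        rw [abs_mul]
        gcongr
    _ = (2 * |E| + |b|) * (1 / (k + 1)) := by ring
    _ ≤ (2 * |E| + |b|) * (√(log (k + 1)) / (k + 1)) := by gcongr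
end
end

section
/- Under the same hypotheses (f C³, symmetric, f'>0 on [0,L/2), f''≤0, f''(L/2)<0), the variance of τₙ satisfies Var(τₙ) = O(ln n / n²) as n → ∞, where Var(τₙ) = 2∫₀ᴸ (f^{n−1}(t)/Iₙ²(t)) ∫₀ᵗ (Iₙ²(s)/f^{n−1}(s)) (u'ₙ,₁(s))² ds dt. -/
open MeasureTheory ProbabilityTheory Filter Set Asymptotics Topology intervalIntegral Real

noncomputable section

/-- A `C¹` function, positive on `(0, 2a)`, whose derivative is antitone on `[0, 2a]` and vanishes
no faster than linearly at the midpoint `a`. -/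
structure IsConcaveProfile (f : ℝ → ℝ) (a c : ℝ) : Prop where
  a_pos : 0 < a
  c_pos : 0 < c
  contDiff : ContDiff ℝ 1 f
  pos : ∀ x ∈ Ioo 0 (2 * a), 0 < f x
  nonneg_zero : 0 ≤ f 0
  antitoneOn_deriv : AntitoneOn (deriv f) (Icc 0 (2 * a))
  le_deriv : ∀ x ∈ Icc 0 a, c * (a - x) ≤ deriv f x
  deriv_le : ∀ x ∈ Icc a (2 * a), deriv f x ≤ -(c * (x - a))

/-- The mass `∫₀ʳ fᵐ`. -/
def mass (f : ℝ → ℝ) (m : ℕ) (r : ℝ) : ℝ := ∫ s in (0 : ℝ)..r, f s ^ m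

/-- The speed density `(∫₀ˢ fᵐ)² / fᵐ(s)`. -/
def speed (f : ℝ → ℝ) (m : ℕ) (s : ℝ) : ℝ := mass f m s ^ 2 / f s ^ m

/-- Minus the derivative of the first moment. -/
def slope₁ (f : ℝ → ℝ) (m : ℕ) (t : ℝ) : ℝ :=
  f t ^ m / mass f m t ^ 2 * ∫ s in (0 : ℝ)..t, speed f m s

theorem exists_isConcaveProfile (L : ℝ) (hL : 0 < L) (f : ℝ → ℝ)
    (hf : ContDiff ℝ 3 f)
    (hpos : ∀ s ∈ Set.Ioo 0 L, 0 < f s)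
    (hsym : ∀ s, f (L - s) = f s)
    (hf'' : ∀ s ∈ Set.Icc 0 L, s ≠ L / 2 → deriv (deriv f) s ≤ 0)
    (hsec : deriv (deriv f) (L / 2) < 0) :
    ∃ c, IsConcaveProfile f (L / 2) c := by
  have hL2 : 2 * (L / 2) = L := by ring
  have hd1 : ContDiff ℝ 2 (deriv f) := by
    have : ContDiff ℝ (2 + 1) f := by norm_num; exact hf
    exact (contDiff_succ_iff_deriv.1 this).2.2
  have hd2 : ContDiff ℝ 1 (deriv (deriv f)) := by
    have : ContDiff ℝ (1 + 1) (deriv f) := by norm_num; exact hd1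
    exact (contDiff_succ_iff_deriv.1 this).2.2
  have hdiff : Differentiable ℝ (deriv f) := hd1.differentiable (by norm_num)
  have hfdiff : Differentiable ℝ f := hf.differentiable (by norm_num)
  have hanti : AntitoneOn (deriv f) (Icc 0 L) := by
    refine antitoneOn_of_deriv_nonpos (convex_Icc 0 L) hdiff.continuous.continuousOn
      hdiff.differentiableOn fun x hx => ?_
    by_cases h : x = L / 2
    · rw [h]; exact hsec.le
    · exact hf'' x (interior_subset hx) h
  have hodd : ∀ x, deriv f x = -deriv f (L - x) := by
    intro x
    have h1 : HasDerivAt (fun s => f (L - s)) (deriv f (L - x) * (-1)) x := by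
      have := (hasDerivAt_id x).const_sub L
      exact (hfdiff (L - x)).hasDerivAt.comp x this
    have h2 : (fun s => f (L - s)) = f := funext hsym
    rw [h2] at h1
    rw [h1.deriv]; ring
  have hmid : deriv f (L / 2) = 0 := by
    have := hodd (L / 2)
    rw [show L - L / 2 = L / 2 by ring] at this
    linarith
  set d := -deriv (deriv f) (L / 2) / 2 with hd
  have hdpos : 0 < d := by rw [hd]; linarith
  have hev : ∀ᶠ x in 𝓝 (L / 2), deriv (deriv f) x < -d :=
    hd2.continuous.continuousAt.eventually_lt continuousAt_const (by rw [hd]; linarith)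
  obtain ⟨e, he, hball⟩ := Metric.eventually_nhds_iff.1 hev
  set ε := min (e / 2) (L / 2) with hε
  have hεpos : 0 < ε := lt_min (by linarith) (by linarith)
  have hεe : ε ≤ e / 2 := min_le_left _ _
  have hεL : ε ≤ L / 2 := min_le_right _ _
  have hnear : ∀ x ∈ Icc (L / 2 - ε) (L / 2), d * (L / 2 - x) ≤ deriv f x := by
    have han : AntitoneOn (fun x => deriv f x + d * x) (Icc (L / 2 - ε) (L / 2)) := by
      refine antitoneOn_of_deriv_nonpos (convex_Icc _ _)
        (hdiff.continuous.add (continuous_const.mul continuous_id)).continuousOn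
        (hdiff.add (differentiable_id.const_mul d)).differentiableOn fun x hx => ?_
      rw [interior_Icc] at hx
      have h1 : HasDerivAt (fun x => deriv f x + d * x) (deriv (deriv f) x + d * 1) x :=
        (hdiff x).hasDerivAt.add ((hasDerivAt_id x).const_mul d)
      rw [h1.deriv]
      have := @hball x (by rw [Real.dist_eq, abs_lt]; constructor <;> linarith [hx.1, hx.2])
      linarith
    intro x hx
    have := han hx ⟨by linarith, le_rfl⟩ hx.2
    simp only [hmid] at this
    linarith
  have hleft : ∀ x ∈ Icc 0 (L / 2), d * ε / (L / 2) * (L / 2 - x) ≤ deriv f x := by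
    intro x hx
    rw [div_mul_eq_mul_div, div_le_iff₀ (by linarith)]
    by_cases h : L / 2 - ε ≤ x
    · have h1 := hnear x ⟨h, hx.2⟩
      have h2 : 0 ≤ d * (L / 2 - x) := mul_nonneg hdpos.le (by linarith [hx.2])
      nlinarith
    · push Not at h
      have h1 := hnear (L / 2 - ε) ⟨le_rfl, by linarith⟩
      have h2 := hanti ⟨hx.1, by linarith [hx.2]⟩
        (⟨by linarith, by linarith⟩ : L / 2 - ε ∈ Icc 0 L) h.le
      have h3 : 0 < d * ε := mul_pos hdpos hεpos
      have h4 : d * ε ≤ deriv f x := by linarith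
      have h5 := hx.1
      nlinarith
  have hnonneg : 0 ≤ f 0 := by
    have h1 : Tendsto f (𝓝[>] 0) (𝓝 (f 0)) := hf.continuous.continuousWithinAt
    refine ge_of_tendsto h1 ?_
    filter_upwards [Ioo_mem_nhdsGT hL] with x hx using (hpos x hx).le
  refine ⟨d * ε / (L / 2), ⟨by linarith, by positivity, hf.of_le (by norm_num), ?_, hnonneg,
    ?_, hleft, ?_⟩⟩
  · rwa [hL2]
  · rwa [hL2]
  · intro x hx
    rw [hL2] at hx
    have := hleft (L - x) ⟨by linarith [hx.2], by linarith [hx.1]⟩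
    rw [hodd x]
    rw [show L / 2 - (L - x) = x - L / 2 by ring] at this
    linarith

namespace IsConcaveProfile

variable {f : ℝ → ℝ} {a c : ℝ} {m : ℕ}

theorem continuous (h : IsConcaveProfile f a c) : Continuous f := h.contDiff.continuous

theorem continuous_deriv (h : IsConcaveProfile f a c) : Continuous (deriv f) :=
  h.contDiff.continuous_deriv (by norm_num)

theorem hasDerivAt (h : IsConcaveProfile f a c) (x : ℝ) : HasDerivAt f (deriv f x) x :=
  (h.contDiff.differentiable (by norm_num) x).hasDerivAt

theorem monotoneOn (h : IsConcaveProfile f a c) : MonotoneOn f (Icc 0 a) := by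
  refine monotoneOn_of_deriv_nonneg (convex_Icc 0 a) h.continuous.continuousOn
    (h.contDiff.differentiable (by norm_num)).differentiableOn fun x hx => ?_
  have hx := interior_subset hx
  exact (mul_nonneg h.c_pos.le (by linarith [hx.2])).trans (h.le_deriv x hx)

theorem antitoneOn (h : IsConcaveProfile f a c) : AntitoneOn f (Icc a (2 * a)) := by
  refine antitoneOn_of_deriv_nonpos (convex_Icc _ _) h.continuous.continuousOn
    (h.contDiff.differentiable (by norm_num)).differentiableOn fun x hx => ?_
  have hx := interior_subset hx
  have := mul_nonneg h.c_pos.le (by linarith [hx.1] : 0 ≤ x - a)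
  linarith [h.deriv_le x hx]

theorem mid_pos (h : IsConcaveProfile f a c) : 0 < f a :=
  h.pos a ⟨h.a_pos, by linarith [h.a_pos]⟩

theorem nonneg_left (h : IsConcaveProfile f a c) {x : ℝ} (hx : x ∈ Icc 0 a) : 0 ≤ f x :=
  h.nonneg_zero.trans (h.monotoneOn ⟨le_rfl, h.a_pos.le⟩ hx hx.1)

theorem pow_pos (h : IsConcaveProfile f a c) {x : ℝ} (hx : x ∈ Ioo 0 (2 * a)) : 0 < f x ^ m :=
  _root_.pow_pos (h.pos x hx) m

theorem continuous_pow (h : IsConcaveProfile f a c) : Continuous fun x => f x ^ m :=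
  h.continuous.pow m

theorem hasDerivAt_mass (h : IsConcaveProfile f a c) (x : ℝ) :
    HasDerivAt (mass f m) (f x ^ m) x :=
  integral_hasDerivAt_right (h.continuous_pow.intervalIntegrable _ _)
    (h.continuous_pow.stronglyMeasurable.stronglyMeasurableAtFilter) h.continuous_pow.continuousAt

theorem continuous_mass (h : IsConcaveProfile f a c) : Continuous (mass f m) :=
  continuous_iff_continuousAt.2 fun x => (h.hasDerivAt_mass x).continuousAt

theorem mass_sub (h : IsConcaveProfile f a c) (s t : ℝ) :
    mass f m t - mass f m s = ∫ x in s..t, f x ^ m :=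
  integral_interval_sub_left (h.continuous_pow.intervalIntegrable _ _)
    (h.continuous_pow.intervalIntegrable _ _)

theorem mass_mono (h : IsConcaveProfile f a c) {s t : ℝ} (hs : 0 ≤ s) (hst : s ≤ t)
    (ht : t < 2 * a) : mass f m s ≤ mass f m t := by
  rw [← sub_nonneg, h.mass_sub]
  refine integral_nonneg hst fun x hx => ?_
  rcases (hs.trans hx.1).eq_or_lt with h0 | h0
  · rw [← h0]; exact pow_nonneg h.nonneg_zero m
  · exact (h.pow_pos ⟨h0, hx.2.trans_lt ht⟩).le

theorem mass_pos (h : IsConcaveProfile f a c) {t : ℝ} (ht : t ∈ Ioo 0 (2 * a)) :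
    0 < mass f m t :=
  intervalIntegral_pos_of_pos_on (h.continuous_pow.intervalIntegrable _ _)
    (fun _ hx => h.pow_pos ⟨hx.1, hx.2.trans ht.2⟩) ht.1

theorem mass_nonneg (h : IsConcaveProfile f a c) {t : ℝ} (ht : 0 ≤ t) (ht' : t < 2 * a) :
    0 ≤ mass f m t := by
  simpa [mass] using h.mass_mono (m := m) le_rfl ht ht'

theorem succ_mul_mass_mul_deriv_le (h : IsConcaveProfile f a c) {s : ℝ} (hs : s ∈ Icc 0 a) :
    (m + 1) * (mass f m s * deriv f s) ≤ f s ^ (m + 1) := by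
  have h1 : ∫ x in (0 : ℝ)..s, (m + 1) * (f x ^ m * deriv f x)
      = f s ^ (m + 1) - f 0 ^ (m + 1) := by
    refine integral_eq_sub_of_hasDerivAt (f := fun x => f x ^ (m + 1)) (fun x _ => ?_) ?_
    · have := (h.hasDerivAt x).pow (m + 1)
      refine this.congr_deriv ?_
      rw [Nat.add_sub_cancel]
      push_cast
      ring
    · have h2 := h.continuous_deriv
      have h3 := h.continuous
      exact Continuous.intervalIntegrable (by fun_prop) _ _
  have h2 : (m + 1) * (mass f m s * deriv f s)
      = ∫ x in (0 : ℝ)..s, (m + 1) * (f x ^ m * deriv f s) := by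
    rw [intervalIntegral.integral_const_mul, intervalIntegral.integral_mul_const]; rfl
  have h3 : ∫ x in (0 : ℝ)..s, (m + 1) * (f x ^ m * deriv f s)
      ≤ ∫ x in (0 : ℝ)..s, (m + 1) * (f x ^ m * deriv f x) := by
    have h4 := h.continuous_deriv
    have h5 := h.continuous
    refine integral_mono_on hs.1 (Continuous.intervalIntegrable (by fun_prop) _ _)
      (Continuous.intervalIntegrable (by fun_prop) _ _) fun x hx => ?_
    have h6 : deriv f s ≤ deriv f x := h.antitoneOn_deriv ⟨hx.1, by linarith [hx.2, hs.2, h.a_pos]⟩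
      ⟨hs.1, by linarith [hs.2, h.a_pos]⟩ hx.2
    have h7 : 0 ≤ f x ^ m := pow_nonneg (h.nonneg_left ⟨hx.1, hx.2.trans hs.2⟩) m
    gcongr
  have h4 : 0 ≤ f 0 ^ (m + 1) := pow_nonneg h.nonneg_zero _
  linarith

theorem mul_mass_mul_deriv_le (h : IsConcaveProfile f a c) {s : ℝ} (hs : s ∈ Icc 0 a) :
    m * (mass f m s * deriv f s) ≤ f s ^ (m + 1) := by
  have h1 := h.succ_mul_mass_mul_deriv_le (m := m) hs
  have h2 : 0 ≤ mass f m s := h.mass_nonneg hs.1 (by linarith [hs.2, h.a_pos])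
  have h3 : 0 ≤ deriv f s :=
    (mul_nonneg h.c_pos.le (by linarith [hs.2])).trans (h.le_deriv s hs)
  nlinarith [mul_nonneg h2 h3]

theorem monotoneOn_mass_div (h : IsConcaveProfile f a c) :
    MonotoneOn (fun x => mass f m x / f x ^ m) (Ioc 0 a) := by
  have hsub : Ioc 0 a ⊆ Ioo 0 (2 * a) := fun x hx => ⟨hx.1, by linarith [hx.2, h.a_pos]⟩
  have hder : ∀ x ∈ Ioc 0 a, HasDerivAt (fun x => mass f m x / f x ^ m)
      ((f x ^ m * f x ^ m - mass f m x * (m * f x ^ (m - 1) * deriv f x)) / (f x ^ m) ^ 2) x :=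
    fun x hx => (h.hasDerivAt_mass x).div ((h.hasDerivAt x).pow m) (h.pow_pos (hsub hx)).ne'
  refine monotoneOn_of_deriv_nonneg (convex_Ioc 0 a)
    (fun x hx => (hder x hx).continuousAt.continuousWithinAt)
    (fun x hx => (hder x (interior_subset hx)).differentiableAt.differentiableWithinAt)
    fun x hx => ?_
  have hx := interior_subset hx
  rw [(hder x hx).deriv]
  refine div_nonneg ?_ (sq_nonneg _)
  rcases m.eq_zero_or_pos with rfl | hm
  · simp
  have h1 := h.mul_mass_mul_deriv_le (m := m) ⟨hx.1.le, hx.2⟩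
  have h2 : 0 < f x ^ (m - 1) := h.pow_pos (hsub hx)
  have h3 : f x ^ m * f x ^ m = f x ^ (m + 1) * f x ^ (m - 1) := by
    rw [← pow_add, ← pow_add]; congr 1; omega
  rw [h3]
  nlinarith [mul_le_mul_of_nonneg_right h1 h2.le]

theorem mul_sub_mul_mass_le (h : IsConcaveProfile f a c) {t : ℝ} (ht : t ∈ Ioc 0 a) :
    m * (a - t) * (mass f m t / f t ^ m) ≤ f a / c := by
  have ht' : t ∈ Icc 0 a := ⟨ht.1.le, ht.2⟩
  have hf : 0 < f t ^ m := h.pow_pos ⟨ht.1, by linarith [ht.2, h.a_pos]⟩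
  have hJ : 0 ≤ mass f m t := h.mass_nonneg ht.1.le (by linarith [ht.2, h.a_pos])
  rw [le_div_iff₀ h.c_pos, mul_div_assoc', div_mul_eq_mul_div, div_le_iff₀ hf]
  calc m * (a - t) * mass f m t * c = m * (mass f m t * (c * (a - t))) := by ring
    _ ≤ m * (mass f m t * deriv f t) := by gcongr; exact h.le_deriv t ht'
    _ ≤ f t ^ (m + 1) := h.mul_mass_mul_deriv_le ht'
    _ = f t * f t ^ m := by ring
    _ ≤ f a * f t ^ m := by
      gcongr
      exact h.monotoneOn ht' ⟨h.a_pos.le, le_rfl⟩ ht.2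

theorem mass_sub_le (h : IsConcaveProfile f a c) {s t : ℝ} (hs : 0 ≤ s) (hst : s ≤ t)
    (ht : t ≤ a) : mass f m t - mass f m s ≤ (t - s) * f t ^ m := by
  rw [h.mass_sub, ← smul_eq_mul, ← intervalIntegral.integral_const]
  refine integral_mono_on hst (h.continuous_pow.intervalIntegrable _ _)
    intervalIntegrable_const fun x hx => ?_
  have h1 := h.nonneg_left ⟨hs.trans hx.1, hx.2.trans ht⟩
  have h2 := h.monotoneOn ⟨hs.trans hx.1, hx.2.trans ht⟩ ⟨hs.trans hst, ht⟩ hx.2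
  gcongr

theorem mass_mid_div_le (h : IsConcaveProfile f a c) {δ : ℝ} (hδ : 0 < δ)
    (hm : m * δ ^ 2 = 1) : mass f m a / f a ^ m ≤ (f a / c + 1) * δ := by
  have hfa : 0 < f a ^ m := _root_.pow_pos h.mid_pos m
  have hca : 0 < f a / c := div_pos h.mid_pos h.c_pos
  rw [div_le_iff₀ hfa]
  rcases le_or_gt a δ with had | had
  · have h1 := h.mass_sub_le (m := m) le_rfl h.a_pos.le le_rfl
    have h2 : mass f m 0 = 0 := by simp [mass]
    rw [h2, sub_zero, sub_zero] at h1
    refine h1.trans ?_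
    gcongr
    nlinarith
  · have hI : a - δ ∈ Ioc 0 a := ⟨by linarith, by linarith⟩
    have h1 := h.mass_sub_le (m := m) hI.1.le hI.2 le_rfl
    have h2 := h.mul_sub_mul_mass_le (m := m) hI
    have hft : 0 < f (a - δ) ^ m := h.pow_pos ⟨hI.1, by linarith⟩
    have h3 : f (a - δ) ^ m ≤ f a ^ m :=
      pow_le_pow_left₀ (h.nonneg_left ⟨hI.1.le, hI.2⟩)
        (h.monotoneOn ⟨hI.1.le, hI.2⟩ ⟨h.a_pos.le, le_rfl⟩ hI.2) m
    set D := mass f m (a - δ) / f (a - δ) ^ m with hD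
    have h4 : mass f m (a - δ) = D * f (a - δ) ^ m := by rw [hD]; field_simp
    have h5 : D ≤ f a / c * δ := by
      calc D = (m * δ ^ 2) * D := by rw [hm, one_mul]
        _ = m * (a - (a - δ)) * D * δ := by ring
        _ ≤ f a / c * δ := by gcongr
    have h6 : D * f (a - δ) ^ m ≤ f a / c * δ * f a ^ m :=
      mul_le_mul h5 h3 hft.le (by positivity)
    have h7 : a - (a - δ) = δ := by ring
    rw [h7] at h1
    linarith

theorem continuousOn_inv_pow (h : IsConcaveProfile f a c) :
    ContinuousOn (fun x => (f x ^ m)⁻¹) (Ioo 0 (2 * a)) :=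
  h.continuous_pow.continuousOn.inv₀ fun _ hx => (h.pow_pos hx).ne'

theorem intervalIntegrable_inv_pow (h : IsConcaveProfile f a c) {s t : ℝ} (hs : 0 < s)
    (hst : s ≤ t) (ht : t < 2 * a) :
    IntervalIntegrable (fun x => (f x ^ m)⁻¹) volume s t :=
  ContinuousOn.intervalIntegrable <| h.continuousOn_inv_pow.mono <| by
    rw [uIcc_of_le hst]
    exact fun x hx => ⟨hs.trans_le hx.1, hx.2.trans_lt ht⟩

theorem inv_pow_mono (h : IsConcaveProfile f a c) {s t : ℝ} (hs : a ≤ s) (hst : s ≤ t)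
    (ht : t < 2 * a) : (f s ^ m)⁻¹ ≤ (f t ^ m)⁻¹ := by
  have ha := h.a_pos
  have h1 : f t ≤ f s := h.antitoneOn ⟨hs, by linarith⟩ ⟨hs.trans hst, ht.le⟩ hst
  have h2 : 0 < f t := h.pos t ⟨by linarith, ht⟩
  have h3 : 0 < f t ^ m := _root_.pow_pos h2 m
  gcongr

theorem upper_integral_inv_pow_le (h : IsConcaveProfile f a c) {p t : ℝ} (hp : a < p)
    (hpt : p ≤ t) (ht : t < 2 * a) :
    c * (p - a) * m * ∫ x in p..t, (f x ^ m)⁻¹ ≤ f a * (f t ^ m)⁻¹ := by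
  have ha := h.a_pos
  have hsub : ∀ x ∈ Icc p t, x ∈ Ioo 0 (2 * a) := fun x hx =>
    ⟨by linarith [hx.1], hx.2.trans_lt ht⟩
  set G : ℝ → ℝ := fun x => -(m * f x ^ (m - 1) * deriv f x) / (f x ^ m) ^ 2 with hG
  have hder : ∀ x ∈ Icc p t, HasDerivAt (fun x => (f x ^ m)⁻¹) (G x) x := fun x hx =>
    ((h.hasDerivAt x).pow m).inv (h.pow_pos (hsub x hx)).ne'
  have hGc : ContinuousOn G (Icc p t) := by
    refine ContinuousOn.div ?_ ((h.continuous_pow (m := m)).pow 2).continuousOn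
      fun x hx => (_root_.pow_pos (h.pow_pos (hsub x hx)) 2).ne'
    exact ((continuous_const.mul (h.continuous.pow _)).mul h.continuous_deriv).neg.continuousOn
  have hGi : IntervalIntegrable G volume p t :=
    ContinuousOn.intervalIntegrable (by rwa [uIcc_of_le hpt])
  have hint : ∫ x in p..t, G x = (f t ^ m)⁻¹ - (f p ^ m)⁻¹ :=
    integral_eq_sub_of_hasDerivAt (fun x hx => hder x (by rwa [uIcc_of_le hpt] at hx)) hGi
  calc c * (p - a) * m * ∫ x in p..t, (f x ^ m)⁻¹
      = ∫ x in p..t, c * (p - a) * m * (f x ^ m)⁻¹ := by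
        rw [intervalIntegral.integral_const_mul]
    _ ≤ ∫ x in p..t, f a * G x := by
        refine integral_mono_on hpt
          ((h.intervalIntegrable_inv_pow (by linarith) hpt ht).const_mul _)
          (hGi.const_mul _) fun x hx => ?_
        have hfx := h.pos x (hsub x hx)
        have hfa : f x ≤ f a := h.antitoneOn ⟨le_rfl, by linarith⟩
          ⟨by linarith [hx.1], (hsub x hx).2.le⟩ (by linarith [hx.1])
        have hd : c * (p - a) ≤ -deriv f x := by
          have h1 := h.deriv_le x ⟨by linarith [hx.1], (hsub x hx).2.le⟩
          have h2 : c * (p - a) ≤ c * (x - a) := by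
            have := h.c_pos
            have := hx.1
            gcongr
          linarith
        have hcp : 0 ≤ c * (p - a) := mul_nonneg h.c_pos.le (by linarith)
        rcases m.eq_zero_or_pos with rfl | hm
        · simp [hG]
        have hpow : f x ^ m = f x ^ (m - 1) * f x := by
          rw [← pow_succ]; congr 1; omega
        have hk : 0 < f x ^ (m - 1) := _root_.pow_pos hfx _
        have hGx : f a * G x = m * (f x ^ m)⁻¹ * (-deriv f x) * (f a / f x) := by
          simp only [hG]
          rw [hpow]
          field_simp
        rw [hGx]
        have h3 : 1 ≤ f a / f x := (one_le_div hfx).2 hfa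
        calc c * (p - a) * m * (f x ^ m)⁻¹ = m * (f x ^ m)⁻¹ * (c * (p - a)) * 1 := by ring
          _ ≤ m * (f x ^ m)⁻¹ * (-deriv f x) * (f a / f x) := by
            have : 0 ≤ -deriv f x := hcp.trans hd
            gcongr
    _ ≤ f a * (f t ^ m)⁻¹ := by
        rw [intervalIntegral.integral_const_mul, hint]
        have h1 : 0 < (f p ^ m)⁻¹ := inv_pos.2 (h.pow_pos (hsub p ⟨le_rfl, hpt⟩))
        have := h.mid_pos
        gcongr
        linarith

theorem mul_pow_mul_integral_inv_le (h : IsConcaveProfile f a c) {t : ℝ} (hat : a < t)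
    (ht : t < 2 * a) :
    m * (t - a) * (f t ^ m * ∫ x in a..t, (f x ^ m)⁻¹) ≤ 4 * (f a / c) := by
  have ha := h.a_pos
  have hc := h.c_pos
  set p := (a + t) / 2 with hp
  have hap : a < p := by rw [hp]; linarith
  have hpt : p < t := by rw [hp]; linarith
  have h1 := h.upper_integral_inv_pow_le (m := m) hap hpt.le ht
  have hi1 := h.intervalIntegrable_inv_pow (m := m) ha hap.le (hpt.trans ht)
  have hi2 := h.intervalIntegrable_inv_pow (m := m) (ha.trans hap) hpt.le ht
  have h2 : ∫ x in a..p, (f x ^ m)⁻¹ ≤ (p - a) * (f p ^ m)⁻¹ := by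
    rw [← smul_eq_mul, ← intervalIntegral.integral_const]
    exact integral_mono_on hap.le hi1 intervalIntegrable_const fun x hx =>
      h.inv_pow_mono hx.1 hx.2 (hpt.trans ht)
  have h3 : (t - p) * (f p ^ m)⁻¹ ≤ ∫ x in p..t, (f x ^ m)⁻¹ := by
    rw [← smul_eq_mul, ← intervalIntegral.integral_const]
    exact integral_mono_on hpt.le intervalIntegrable_const hi2 fun x hx =>
      h.inv_pow_mono hap.le hx.1 (hx.2.trans_lt ht)
  have h4 := integral_add_adjacent_intervals hi1 hi2
  have h5 : p - a = t - p := by rw [hp]; ring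
  have hft : 0 < f t ^ m := h.pow_pos ⟨by linarith, ht⟩
  have h6 : ∫ x in a..t, (f x ^ m)⁻¹ ≤ 2 * ∫ x in p..t, (f x ^ m)⁻¹ := by
    rw [← h4]
    rw [h5] at h2
    linarith
  rw [mul_div_assoc', le_div_iff₀ hc]
  have hta : 0 ≤ t - a := by linarith
  calc m * (t - a) * (f t ^ m * ∫ x in a..t, (f x ^ m)⁻¹) * c
      ≤ m * (t - a) * (f t ^ m * (2 * ∫ x in p..t, (f x ^ m)⁻¹)) * c := by gcongr
    _ = 4 * f t ^ m * (c * (p - a) * m * ∫ x in p..t, (f x ^ m)⁻¹) := by rw [hp]; ring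
    _ ≤ 4 * f t ^ m * (f a * (f t ^ m)⁻¹) := by gcongr
    _ = 4 * f a := by field_simp

theorem pow_mul_integral_inv_le (h : IsConcaveProfile f a c) {t : ℝ} (hat : a < t)
    (ht : t < 2 * a) : f t ^ m * ∫ x in a..t, (f x ^ m)⁻¹ ≤ t - a := by
  have hft : 0 < f t ^ m := h.pow_pos ⟨by linarith [h.a_pos], ht⟩
  have h2 : ∫ x in a..t, (f x ^ m)⁻¹ ≤ (t - a) * (f t ^ m)⁻¹ := by
    rw [← smul_eq_mul, ← intervalIntegral.integral_const]
    exact integral_mono_on hat.le (h.intervalIntegrable_inv_pow h.a_pos hat.le ht)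
      intervalIntegrable_const fun x hx => h.inv_pow_mono hx.1 hx.2 ht
  calc f t ^ m * ∫ x in a..t, (f x ^ m)⁻¹ ≤ f t ^ m * ((t - a) * (f t ^ m)⁻¹) := by gcongr
    _ = t - a := by field_simp

theorem le_pow_mul_integral_inv (h : IsConcaveProfile f a c) {t : ℝ} (hat : a < t)
    (ht : t < 2 * a) :
    (t - a) * (f t ^ m / f a ^ m) ≤ f t ^ m * ∫ x in a..t, (f x ^ m)⁻¹ := by
  have hft : 0 < f t ^ m := h.pow_pos ⟨by linarith [h.a_pos], ht⟩
  have h2 : (t - a) * (f a ^ m)⁻¹ ≤ ∫ x in a..t, (f x ^ m)⁻¹ := by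
    rw [← smul_eq_mul, ← intervalIntegral.integral_const]
    exact integral_mono_on hat.le intervalIntegrable_const
      (h.intervalIntegrable_inv_pow h.a_pos hat.le ht) fun x hx =>
      h.inv_pow_mono le_rfl hx.1 (hx.2.trans_lt ht)
  calc (t - a) * (f t ^ m / f a ^ m) = f t ^ m * ((t - a) * (f a ^ m)⁻¹) := by
        rw [div_eq_mul_inv]; ring
    _ ≤ _ := by gcongr

theorem continuousOn_speed (h : IsConcaveProfile f a c) :
    ContinuousOn (speed f m) (Ioo 0 (2 * a)) :=
  (h.continuous_mass.pow 2).continuousOn.div h.continuous_pow.continuousOn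
    fun _ hx => (h.pow_pos hx).ne'

theorem speed_nonneg (h : IsConcaveProfile f a c) {s : ℝ} (hs : 0 ≤ s) (hs' : s < 2 * a) :
    0 ≤ speed f m s := by
  rcases hs.eq_or_lt with rfl | hs
  · simp [speed, mass]
  · exact div_nonneg (sq_nonneg _) (h.pow_pos ⟨hs, hs'⟩).le

theorem speed_le_left (h : IsConcaveProfile f a c) {s t : ℝ} (hs : s ∈ Ioc 0 t) (ht : t ≤ a) :
    speed f m s ≤ (mass f m t / f t ^ m) ^ 2 * f s ^ m := by
  have ha := h.a_pos
  have hfs : 0 < f s ^ m := h.pow_pos ⟨hs.1, by linarith [hs.2]⟩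
  have h1 : mass f m s / f s ^ m ≤ mass f m t / f t ^ m :=
    h.monotoneOn_mass_div ⟨hs.1, hs.2.trans ht⟩ ⟨hs.1.trans_le hs.2, ht⟩ hs.2
  have h2 : 0 ≤ mass f m s / f s ^ m :=
    div_nonneg (h.mass_nonneg hs.1.le (by linarith [hs.2])) hfs.le
  calc speed f m s = (mass f m s / f s ^ m) ^ 2 * f s ^ m := by
        rw [speed]; field_simp
    _ ≤ _ := by gcongr

theorem intervalIntegrable_speed (h : IsConcaveProfile f a c) {t : ℝ} (ht : t ∈ Ioo 0 (2 * a)) :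
    IntervalIntegrable (speed f m) volume 0 t := by
  have ha := h.a_pos
  have h1 : IntervalIntegrable (speed f m) volume 0 a := by
    refine (((h.continuous_pow (m := m)).intervalIntegrable (μ := volume) 0 a).const_mul
      ((mass f m a / f a ^ m) ^ 2)).mono_fun ?_ ?_
    · rw [uIoc_of_le ha.le]
      exact (h.continuousOn_speed.mono fun x hx => ⟨hx.1, by linarith [hx.2]⟩).aestronglyMeasurable
        measurableSet_Ioc
    · rw [uIoc_of_le ha.le]
      refine (ae_restrict_iff' measurableSet_Ioc).2 (.of_forall fun x hx => ?_)
      simp only [Real.norm_of_nonneg (h.speed_nonneg (m := m) hx.1.le (by linarith [hx.2]))]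
      exact (h.speed_le_left hx le_rfl).trans (le_abs_self _)
  refine h1.trans (ContinuousOn.intervalIntegrable (h.continuousOn_speed.mono fun x hx => ?_))
  exact (ordConnected_Ioo.uIcc_subset ⟨ha, by linarith⟩ ht) hx

theorem integral_speed_le_left (h : IsConcaveProfile f a c) {t : ℝ} (ht : t ∈ Ioc 0 a) :
    ∫ s in (0 : ℝ)..t, speed f m s ≤ (mass f m t / f t ^ m) ^ 2 * mass f m t := by
  have ha := h.a_pos
  rw [mass, ← intervalIntegral.integral_const_mul]
  refine integral_mono_on_of_le_Ioo ht.1.le (h.intervalIntegrable_speed ⟨ht.1, by linarith [ht.2]⟩)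
    ((h.continuous_pow.intervalIntegrable _ _).const_mul _) fun s hs => ?_
  exact h.speed_le_left ⟨hs.1, hs.2.le⟩ ht.2

theorem slope₁_nonneg (h : IsConcaveProfile f a c) {t : ℝ} (ht : t ∈ Ioo 0 (2 * a)) :
    0 ≤ slope₁ f m t :=
  mul_nonneg (div_nonneg (h.pow_pos ht).le (sq_nonneg _)) <|
    integral_nonneg ht.1.le fun _ hs => h.speed_nonneg hs.1 (hs.2.trans_lt ht.2)

theorem slope₁_le_left (h : IsConcaveProfile f a c) {t : ℝ} (ht : t ∈ Ioc 0 a) :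
    slope₁ f m t ≤ mass f m t / f t ^ m := by
  have htt : t ∈ Ioo 0 (2 * a) := ⟨ht.1, by linarith [ht.2, h.a_pos]⟩
  have hf := h.pow_pos (m := m) htt
  have hJ := h.mass_pos (m := m) htt
  calc slope₁ f m t
      ≤ f t ^ m / mass f m t ^ 2 * ((mass f m t / f t ^ m) ^ 2 * mass f m t) := by
        rw [slope₁]
        gcongr
        exact h.integral_speed_le_left ht
    _ = _ := by field_simp

theorem slope₁_le_right (h : IsConcaveProfile f a c) {t : ℝ} (hat : a < t) (ht : t < 2 * a) :
    slope₁ f m t ≤ mass f m a / f a ^ m * (f t ^ m / f a ^ m)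
      + f t ^ m * ∫ x in a..t, (f x ^ m)⁻¹ := by
  have ha := h.a_pos
  have haa : a ∈ Ioo 0 (2 * a) := ⟨ha, by linarith⟩
  have htt : t ∈ Ioo 0 (2 * a) := ⟨by linarith, ht⟩
  have hfa := h.pow_pos (m := m) haa
  have hft := h.pow_pos (m := m) htt
  have hJa := h.mass_pos (m := m) haa
  have hJt := h.mass_pos (m := m) htt
  have hJ := h.mass_mono (m := m) ha.le hat.le ht
  have hi1 := h.intervalIntegrable_speed (m := m) haa
  have hi2 : IntervalIntegrable (speed f m) volume a t :=
    hi1.symm.trans (h.intervalIntegrable_speed htt)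
  have h1 := h.integral_speed_le_left (m := m) (t := a) ⟨ha, le_rfl⟩
  have h2 : ∫ s in a..t, speed f m s ≤ mass f m t ^ 2 * ∫ x in a..t, (f x ^ m)⁻¹ := by
    rw [← intervalIntegral.integral_const_mul]
    refine integral_mono_on hat.le hi2
      ((h.intervalIntegrable_inv_pow ha hat.le ht).const_mul _) fun s hs => ?_
    have h3 := h.mass_mono (m := m) (ha.le.trans hs.1) hs.2 ht
    have h4 := h.mass_nonneg (m := m) (ha.le.trans hs.1) (hs.2.trans_lt ht)
    have h5 : 0 < f s ^ m := h.pow_pos ⟨ha.trans_le hs.1, hs.2.trans_lt ht⟩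
    rw [speed, div_eq_mul_inv]
    gcongr
  rw [slope₁, ← integral_add_adjacent_intervals hi1 hi2, mul_add]
  gcongr ?_ + ?_
  · calc f t ^ m / mass f m t ^ 2 * ∫ s in (0 : ℝ)..a, speed f m s
        ≤ f t ^ m / mass f m a ^ 2 * ((mass f m a / f a ^ m) ^ 2 * mass f m a) := by
          have : 0 ≤ ∫ s in (0 : ℝ)..a, speed f m s :=
            integral_nonneg ha.le fun s hs => h.speed_nonneg hs.1 (by linarith [hs.2])
          gcongr
      _ = _ := by field_simp
  · calc f t ^ m / mass f m t ^ 2 * ∫ s in a..t, speed f m s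
        ≤ f t ^ m / mass f m t ^ 2 * (mass f m t ^ 2 * ∫ x in a..t, (f x ^ m)⁻¹) := by
          gcongr
      _ = _ := by field_simp

theorem exists_slope₁_le (h : IsConcaveProfile f a c) :
    ∃ C, 0 < C ∧ ∀ (m : ℕ) (δ : ℝ), 0 < δ → m * δ ^ 2 = 1 → ∀ t ∈ Ioo 0 (2 * a),
      slope₁ f m t * (m * (δ + |t - a|)) ≤ C := by
  have ha := h.a_pos
  set q := f a / c with hq
  have hqpos : 0 < q := div_pos h.mid_pos h.c_pos
  refine ⟨(q + 1) + q + (1 + 8 * q) + (q + 1) * (2 + 4 * q), by positivity,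
    fun m δ hδ hm t ht => ?_⟩
  have hmpos : (0 : ℝ) < m := by
    rcases m.eq_zero_or_pos with rfl | h0
    · simp at hm
    · exact_mod_cast h0
  have hB := h.mass_mid_div_le hδ hm
  rcases le_or_gt t a with hta | hta
  · have h1 := h.slope₁_le_left (m := m) ⟨ht.1, hta⟩
    have h2 := h.mul_sub_mul_mass_le (m := m) ⟨ht.1, hta⟩
    have h3 : mass f m t / f t ^ m ≤ mass f m a / f a ^ m :=
      h.monotoneOn_mass_div ⟨ht.1, hta⟩ ⟨ha, le_rfl⟩ hta
    set D := mass f m t / f t ^ m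
    have h4 : D * (m * δ) ≤ q + 1 := by
      calc D * (m * δ) ≤ ((q + 1) * δ) * (m * δ) := by gcongr; exact h3.trans hB
        _ = (q + 1) * (m * δ ^ 2) := by ring
        _ = q + 1 := by rw [hm, mul_one]
    rw [abs_of_nonpos (by linarith)]
    have h5 : 0 ≤ m * (δ + -(t - a)) := mul_nonneg hmpos.le (by linarith)
    have h6 : slope₁ f m t * (m * (δ + -(t - a))) ≤ D * (m * (δ + -(t - a))) := by gcongr
    have h7 : D * (m * (δ + -(t - a))) = D * (m * δ) + m * (a - t) * D := by ring
    have h8 : 0 ≤ (1 + 8 * q) + (q + 1) * (2 + 4 * q) := by positivity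
    linarith
  · have h1 := h.slope₁_le_right (m := m) hta ht.2
    have h2 := h.mul_pow_mul_integral_inv_le (m := m) hta ht.2
    have h3 := h.pow_mul_integral_inv_le (m := m) hta ht.2
    have h4 := h.le_pow_mul_integral_inv (m := m) hta ht.2
    have hft := h.pow_pos (m := m) ht
    have hfa : 0 < f a ^ m := _root_.pow_pos h.mid_pos m
    set D := f t ^ m * ∫ x in a..t, (f x ^ m)⁻¹
    set ρ := f t ^ m / f a ^ m with hρ
    set B := mass f m a / f a ^ m
    have hρ0 : 0 < ρ := div_pos hft hfa
    have hρ1 : ρ ≤ 1 := by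
      rw [hρ, div_le_one hfa]
      exact pow_le_pow_left₀ (h.pos t ht).le
        (h.antitoneOn ⟨le_rfl, by linarith⟩ ⟨hta.le, ht.2.le⟩ hta.le) m
    set x := t - a with hx
    have hx0 : 0 < x := by rw [hx]; linarith
    rw [abs_of_pos hx0]
    have hD0 : 0 ≤ D := (by positivity : (0 : ℝ) ≤ x * ρ).trans h4
    have hDδ : D * (m * δ) ≤ 1 + 4 * q := by
      rcases le_or_gt x δ with hxδ | hxδ
      · calc D * (m * δ) ≤ δ * (m * δ) := by gcongr; exact h3.trans hxδ
          _ = m * δ ^ 2 := by ring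
          _ ≤ 1 + 4 * q := by rw [hm]; linarith
      · calc D * (m * δ) ≤ D * (m * x) := by gcongr
          _ = m * x * D := by ring
          _ ≤ 1 + 4 * q := by linarith
    have hρx : m * δ * x * ρ ≤ 1 + 4 * q := by
      calc m * δ * x * ρ = (x * ρ) * (m * δ) := by ring
        _ ≤ D * (m * δ) := by gcongr
        _ ≤ 1 + 4 * q := hDδ
    have hBρ : B * ρ * (m * (δ + x)) ≤ (q + 1) * (2 + 4 * q) := by
      calc B * ρ * (m * (δ + x)) ≤ ((q + 1) * δ) * ρ * (m * (δ + x)) := by gcongr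
        _ = (q + 1) * (ρ * (m * δ ^ 2) + m * δ * x * ρ) := by ring
        _ ≤ (q + 1) * (2 + 4 * q) := by
          rw [hm]
          refine mul_le_mul_of_nonneg_left ?_ (by linarith)
          linarith
    have h6 : slope₁ f m t * (m * (δ + x)) ≤ (B * ρ + D) * (m * (δ + x)) := by gcongr
    have h7 : (B * ρ + D) * (m * (δ + x))
      = B * ρ * (m * (δ + x)) + D * (m * δ) + m * x * D := by ring
    linarith

theorem continuousOn_slope₁ (h : IsConcaveProfile f a c) :
    ContinuousOn (slope₁ f m) (Ioo 0 (2 * a)) := by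
  refine ContinuousOn.mul (h.continuous_pow.continuousOn.div
    (h.continuous_mass.pow 2).continuousOn fun t ht => (_root_.pow_pos (h.mass_pos ht) 2).ne')
    fun t ht => ContinuousAt.continuousWithinAt ?_
  exact (integral_hasDerivAt_right (h.intervalIntegrable_speed ht)
    (h.continuousOn_speed.stronglyMeasurableAtFilter isOpen_Ioo t ht)
    (h.continuousOn_speed.continuousAt (isOpen_Ioo.mem_nhds ht))).continuousAt

theorem intervalIntegrable_slope₁ (h : IsConcaveProfile f a c) {B : ℝ}
    (hB : ∀ t ∈ Ioo 0 (2 * a), slope₁ f m t ≤ B) :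
    IntervalIntegrable (slope₁ f m) volume 0 (2 * a) := by
  have ha := h.a_pos
  rw [intervalIntegrable_iff_integrableOn_Ioo_of_le (by linarith)]
  refine IntegrableOn.of_bound measure_Ioo_lt_top
    (h.continuousOn_slope₁.aestronglyMeasurable measurableSet_Ioo) B ?_
  refine (ae_restrict_iff' measurableSet_Ioo).2 (.of_forall fun t ht => ?_)
  rw [Real.norm_of_nonneg (h.slope₁_nonneg ht)]
  exact hB t ht

theorem deriv_integral_slope₁ (h : IsConcaveProfile f a c)
    (hi : IntervalIntegrable (slope₁ f m) volume 0 (2 * a)) {s : ℝ} (hs : s ∈ Ioo 0 (2 * a)) :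
    deriv (fun r => ∫ t in r..(2 * a), slope₁ f m t) s = -slope₁ f m s := by
  refine (integral_hasDerivAt_left (hi.mono_set ?_)
    (h.continuousOn_slope₁.stronglyMeasurableAtFilter isOpen_Ioo s hs)
    (h.continuousOn_slope₁.continuousAt (isOpen_Ioo.mem_nhds hs))).deriv
  rw [uIcc_of_le hs.2.le, uIcc_of_le (hs.1.trans hs.2).le]
  exact Icc_subset_Icc_left hs.1.le

theorem integral_weighted_speed_le (h : IsConcaveProfile f a c)
    (hi : IntervalIntegrable (slope₁ f m) volume 0 (2 * a)) {v : ℝ → ℝ} {B : ℝ}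
    (hv : ∀ s ∈ Ioo 0 (2 * a), v s ^ 2 ≤ B) :
    ∫ t in (0 : ℝ)..(2 * a), f t ^ m / mass f m t ^ 2 *
        ∫ s in (0 : ℝ)..t, speed f m s * v s ^ 2
      ≤ B * ∫ t in (0 : ℝ)..(2 * a), slope₁ f m t := by
  have ha := h.a_pos
  have h2a : 0 ≤ 2 * a := by linarith
  rw [← intervalIntegral.integral_const_mul, integral_of_le h2a, integral_of_le h2a,
    integral_Ioc_eq_integral_Ioo, integral_Ioc_eq_integral_Ioo]
  have hw : ∀ t ∈ Ioo 0 (2 * a), 0 ≤ f t ^ m / mass f m t ^ 2 := fun t ht =>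
    div_nonneg (h.pow_pos ht).le (sq_nonneg _)
  refine integral_mono_of_nonneg ?_ ?_ ?_
  · refine (ae_restrict_iff' measurableSet_Ioo).2 (.of_forall fun t ht => ?_)
    refine mul_nonneg (hw t ht) (integral_nonneg ht.1.le fun s hs => ?_)
    exact mul_nonneg (h.speed_nonneg hs.1 (hs.2.trans_lt ht.2)) (sq_nonneg _)
  · exact ((intervalIntegrable_iff_integrableOn_Ioo_of_le h2a).1 hi).const_mul B
  · refine (ae_restrict_iff' measurableSet_Ioo).2 (.of_forall fun t ht => ?_)
    have h1 : ∫ s in (0 : ℝ)..t, speed f m s * v s ^ 2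
        ≤ B * ∫ s in (0 : ℝ)..t, speed f m s := by
      rw [← intervalIntegral.integral_const_mul, integral_of_le ht.1.le, integral_of_le ht.1.le]
      refine integral_mono_of_nonneg ?_
        (((intervalIntegrable_iff_integrableOn_Ioc_of_le ht.1.le).1
          (h.intervalIntegrable_speed ht)).const_mul B) ?_
      · refine (ae_restrict_iff' measurableSet_Ioc).2 (.of_forall fun s hs => ?_)
        exact mul_nonneg (h.speed_nonneg hs.1.le (hs.2.trans_lt ht.2)) (sq_nonneg _)
      · refine (ae_restrict_iff' measurableSet_Ioc).2 (.of_forall fun s hs => ?_)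
        have h2 := h.speed_nonneg (m := m) hs.1.le (hs.2.trans_lt ht.2)
        have h3 := hv s ⟨hs.1, hs.2.trans_lt ht.2⟩
        simp only
        rw [mul_comm B]
        gcongr
    have h2 := mul_le_mul_of_nonneg_left h1 (hw t ht)
    simp only [slope₁]
    linarith

end IsConcaveProfile

theorem integral_inv_add_abs_sub {a δ : ℝ} (ha : 0 < a) (hδ : 0 < δ) :
    ∫ t in (0 : ℝ)..(2 * a), (δ + |t - a|)⁻¹ = 2 * Real.log (1 + a / δ) := by
  have hc : Continuous fun t : ℝ => (δ + |t - a|)⁻¹ :=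
    Continuous.inv₀ (by fun_prop) fun t => by positivity
  rw [← integral_add_adjacent_intervals (hc.intervalIntegrable 0 a)
    (hc.intervalIntegrable a (2 * a))]
  have hlog : Real.log (1 + a / δ) = Real.log (δ + a) - Real.log δ := by
    rw [← Real.log_div (by positivity) hδ.ne']
    congr 1
    field_simp
  have h1 : ∫ t in (0 : ℝ)..a, (δ + |t - a|)⁻¹ = -Real.log δ - -Real.log (δ + a) := by
    have := integral_eq_sub_of_hasDerivAt (a := 0) (b := a)
      (f := fun t => -Real.log (δ + (a - t))) (f' := fun t => (δ + |t - a|)⁻¹) ?_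
      (hc.intervalIntegrable 0 a)
    · simpa using this
    · intro t ht
      rw [uIcc_of_le ha.le] at ht
      have h0 : HasDerivAt (fun t => δ + (a - t)) (-1) t :=
        ((hasDerivAt_id t).const_sub a).const_add δ
      refine (h0.log (by linarith [ht.2])).neg.congr_deriv ?_
      rw [abs_of_nonpos (by linarith [ht.2]), neg_sub, neg_div, neg_neg, one_div]
  have h2 : ∫ t in a..(2 * a), (δ + |t - a|)⁻¹ = Real.log (δ + a) - Real.log δ := by
    have := integral_eq_sub_of_hasDerivAt (a := a) (b := 2 * a)
      (f := fun t => Real.log (δ + (t - a))) (f' := fun t => (δ + |t - a|)⁻¹) ?_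
      (hc.intervalIntegrable a (2 * a))
    · rw [this, sub_self, add_zero, show 2 * a - a = a by ring]
    · intro t ht
      rw [uIcc_of_le (by linarith)] at ht
      have h0 : HasDerivAt (fun t => δ + (t - a)) 1 t :=
        ((hasDerivAt_id t).sub_const a).const_add δ
      refine (h0.log (by linarith [ht.1])).congr_deriv ?_
      rw [abs_of_nonneg (by linarith [ht.1]), one_div]
  rw [h1, h2, hlog]
  ring

theorem IsConcaveProfile.exists_weighted_integral_le {f : ℝ → ℝ} {a c : ℝ}
    (h : IsConcaveProfile f a c) :
    ∃ C, 0 < C ∧ ∀ m : ℕ, 0 < m →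
      ∫ t in (0 : ℝ)..(2 * a), f t ^ m / mass f m t ^ 2 *
        ∫ s in (0 : ℝ)..t, speed f m s *
          (deriv (fun r => ∫ t in r..(2 * a), slope₁ f m t) s) ^ 2
      ≤ C * (Real.log (1 + a * √m) / m ^ 2) := by
  have ha := h.a_pos
  obtain ⟨C, hC, hbound⟩ := h.exists_slope₁_le
  refine ⟨2 * C ^ 3, by positivity, fun m hm => ?_⟩
  have hm' : (0 : ℝ) < m := by exact_mod_cast hm
  have hsq : √(m : ℝ) ^ 2 = m := Real.sq_sqrt hm'.le
  have hs : 0 < √(m : ℝ) := Real.sqrt_pos.2 hm'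
  have hmδ : (m : ℝ) * (√(m : ℝ))⁻¹ ^ 2 = 1 := by
    rw [inv_pow, hsq]; field_simp
  have hδ := inv_pos.2 hs
  have hle := hbound m _ hδ hmδ
  have hle' : ∀ t ∈ Ioo 0 (2 * a),
      slope₁ f m t ≤ C / m * ((√(m : ℝ))⁻¹ + |t - a|)⁻¹ := by
    intro t ht
    have h1 : 0 < (√(m : ℝ))⁻¹ + |t - a| := by positivity
    rw [← div_eq_mul_inv, div_div, le_div_iff₀ (by positivity)]
    exact hle t ht
  have hsup : ∀ t ∈ Ioo 0 (2 * a), slope₁ f m t ≤ C * (√(m : ℝ))⁻¹ := by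
    intro t ht
    calc slope₁ f m t ≤ C / m * ((√(m : ℝ))⁻¹ + |t - a|)⁻¹ := hle' t ht
      _ ≤ C / m * ((√(m : ℝ))⁻¹)⁻¹ := by
        gcongr
        linarith [abs_nonneg (t - a)]
      _ = C * (√(m : ℝ))⁻¹ := by
        rw [inv_inv]
        nth_rewrite 1 [← hsq]
        field_simp
  have hi := h.intervalIntegrable_slope₁ hsup
  have hc : Continuous fun t : ℝ => ((√(m : ℝ))⁻¹ + |t - a|)⁻¹ :=
    Continuous.inv₀ (by fun_prop) fun t => by positivity
  have hint : ∫ t in (0 : ℝ)..(2 * a), slope₁ f m t ≤ C / m * (2 * Real.log (1 + a * √m)) := by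
    have h1 := integral_inv_add_abs_sub ha hδ
    rw [div_inv_eq_mul] at h1
    rw [← h1, ← intervalIntegral.integral_const_mul]
    exact integral_mono_on_of_le_Ioo (by linarith) hi ((hc.intervalIntegrable _ _).const_mul _) hle'
  have hv : ∀ s ∈ Ioo 0 (2 * a),
      (deriv (fun r => ∫ t in r..(2 * a), slope₁ f m t) s) ^ 2 ≤ C ^ 2 / m := by
    intro s hs'
    rw [h.deriv_integral_slope₁ hi hs', neg_sq]
    calc slope₁ f m s ^ 2 ≤ (C * (√(m : ℝ))⁻¹) ^ 2 :=
          pow_le_pow_left₀ (h.slope₁_nonneg hs') (hsup s hs') 2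
      _ = C ^ 2 / m := by rw [mul_pow, inv_pow, hsq, div_eq_mul_inv]
  calc _ ≤ C ^ 2 / m * ∫ t in (0 : ℝ)..(2 * a), slope₁ f m t :=
        h.integral_weighted_speed_le hi hv
    _ ≤ C ^ 2 / m * (C / m * (2 * Real.log (1 + a * √m))) := by gcongr
    _ = _ := by field_simp

theorem log_one_add_mul_sqrt_div_sq_le {a : ℝ} (ha : 0 < a) {n : ℕ} (hn : 3 ≤ n) :
    Real.log (1 + a * √((n - 1 : ℕ) : ℝ)) / ((n - 1 : ℕ) : ℝ) ^ 2
      ≤ 4 * (Real.log (1 + a) + 1) * (Real.log n / (n : ℝ) ^ 2) := by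
  have hn' : (3 : ℝ) ≤ n := by exact_mod_cast hn
  have hcast : ((n - 1 : ℕ) : ℝ) = n - 1 := by rw [Nat.cast_sub (by omega)]; simp
  rw [hcast]
  have hsqrt : √((n : ℝ) - 1) ≤ n := by
    rw [Real.sqrt_le_left (by linarith)]
    nlinarith
  have hlogn : 1 ≤ Real.log n := by
    rw [Real.le_log_iff_exp_le (by linarith)]
    linarith [Real.exp_one_lt_three]
  have hloga : 0 ≤ Real.log (1 + a) := Real.log_nonneg (by linarith)
  have h1 : Real.log (1 + a * √((n : ℝ) - 1)) ≤ (Real.log (1 + a) + 1) * Real.log n := by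
    calc Real.log (1 + a * √((n : ℝ) - 1)) ≤ Real.log ((1 + a) * n) := by
          apply Real.log_le_log (by positivity)
          nlinarith
      _ = Real.log (1 + a) + Real.log n := Real.log_mul (by linarith) (by linarith)
      _ ≤ _ := by nlinarith
  have h2 : (n : ℝ) ^ 2 / 4 ≤ ((n : ℝ) - 1) ^ 2 := by nlinarith
  calc Real.log (1 + a * √((n : ℝ) - 1)) / ((n : ℝ) - 1) ^ 2
      ≤ (Real.log (1 + a) + 1) * Real.log n / ((n : ℝ) ^ 2 / 4) := by gcongr
    _ = _ := by field_simp

/-- `Var(τₙ) = O(ln n / n²)`, the variance being given by the explicit formula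
`2 ∫₀ᴸ (f^{n-1}(t)/Iₙ²(t)) ∫₀ᵗ (Iₙ²(s)/f^{n-1}(s)) (u'ₙ,₁(s))² ds dt`. -/
theorem variance_bigO
    (L : ℝ) (hL : 0 < L) (f : ℝ → ℝ)
    (hf : ContDiff ℝ 3 f)
    (hpos : ∀ s ∈ Set.Ioo 0 L, 0 < f s)
    (hasymp : Asymptotics.IsEquivalent (𝓝[>] (0:ℝ)) f id)
    (hsym : ∀ s, f (L - s) = f s)
    (hf' : ∀ s ∈ Set.Ico 0 (L / 2), 0 < deriv f s)
    (hf'' : ∀ s ∈ Set.Icc 0 L, s ≠ L / 2 → deriv (deriv f) s ≤ 0)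
    (hsec : deriv (deriv f) (L / 2) < 0)
    (I : ℕ → ℝ → ℝ)
    (hI : ∀ n r, I n r = ∫ s in (0:ℝ)..r, f s ^ (n - 1))
    (u : ℕ → ℝ → ℝ)
    (hu : ∀ n r, u n r = ∫ t in r..L, f t ^ (n - 1) / (I n t) ^ 2 *
        ∫ s in (0:ℝ)..t, (I n s) ^ 2 / f s ^ (n - 1))
    {Ω : ℕ → Type*} [∀ n, MeasureSpace (Ω n)]
    [∀ n, IsProbabilityMeasure (volume : Measure (Ω n))]
    (τ : ∀ n, Ω n → ℝ)
    (hVar : ∀ n, 2 ≤ n →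
      variance (τ n) volume = 2 * ∫ t in (0:ℝ)..L, f t ^ (n - 1) / (I n t) ^ 2 *
        ∫ s in (0:ℝ)..t, (I n s) ^ 2 / f s ^ (n - 1) * (deriv (u n) s) ^ 2) :
    (fun n : ℕ => variance (τ n) volume)
      =O[atTop] (fun n : ℕ => Real.log n / (n : ℝ) ^ 2) := by
  obtain ⟨c, h⟩ := exists_isConcaveProfile L hL f hf hpos hsym hf'' hsec
  obtain ⟨C, hC, hbound⟩ := h.exists_weighted_integral_le
  refine IsBigO.of_bound (2 * C * (4 * (Real.log (1 + L / 2) + 1))) ?_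
  filter_upwards [eventually_ge_atTop 3] with n hn
  have hn' : (3 : ℝ) ≤ n := by exact_mod_cast hn
  have hb := hbound (n - 1) (by omega)
  have hIn : I n = mass f (n - 1) := funext fun r => hI n r
  have hun : u n = fun r => ∫ t in r..(2 * (L / 2)), slope₁ f (n - 1) t := by
    funext r
    rw [hu, hIn, mul_div_cancel₀ L two_ne_zero]
    rfl
  rw [← hun, mul_div_cancel₀ L two_ne_zero] at hb
  have hlog : 0 ≤ Real.log n / (n : ℝ) ^ 2 := by
    have := Real.log_nonneg (by linarith : (1 : ℝ) ≤ n)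
    positivity
  rw [Real.norm_of_nonneg (variance_nonneg _ _), Real.norm_of_nonneg hlog, hVar n (by omega), hIn]
  have hl := log_one_add_mul_sqrt_div_sq_le (half_pos hL) hn
  calc _ ≤ 2 * (C * (Real.log (1 + L / 2 * √((n - 1 : ℕ) : ℝ)) / ((n - 1 : ℕ) : ℝ) ^ 2)) :=
        mul_le_mul_of_nonneg_left hb zero_le_two
    _ ≤ 2 * (C * (4 * (Real.log (1 + L / 2) + 1) * (Real.log n / (n : ℝ) ^ 2))) := by gcongr
    _ = _ := by ring
end
end

section
/- For k ≥ 2, under the hypotheses f C^{2k+1}, weight, symmetric about L/2, f'>0 on [0,L/2), f''≤0, f(L/2+h)=f(L/2)+(f^{(2k)}(L/2)/(2k)!)h^{2k}+o(h^{2k}) with f^{(2k)}(L/2)<0, one has E[τₙ] ~ (2k C(2k) C(f,2k)²)/(n^{1/k} Γ(1/(2k))), where C(f,2k) = ((2k)! f(L/2)/|f^{(2k)}(L/2)|)^{1/(2k)}, C(2k) = ∫₀^∞ h₁(a) h₁(−a) e^{a^{2k}} da and h₁(x) = ∫_{−∞}^x e^{−a^{2k}} da. -/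
open MeasureTheory Filter Set Asymptotics Topology intervalIntegral Real

noncomputable section

theorem integrable_exp_neg_mul_abs {c : ℝ} (hc : 0 < c) :
    Integrable fun b : ℝ => Real.exp (-(c * |b|)) := by
  rw [← integrableOn_univ, ← Iic_union_Ioi (a := (0 : ℝ))]
  refine IntegrableOn.union ?_ ?_
  · refine (integrableOn_exp_mul_Iic hc 0).congr_fun (fun b hb => ?_) measurableSet_Iic
    simp [abs_of_nonpos (mem_Iic.1 hb)]
  · refine (exp_neg_integrableOn_Ioi 0 hc).congr_fun (fun b hb => ?_) measurableSet_Ioi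
    simp [abs_of_pos (mem_Ioi.1 hb)]

theorem integrableOn_Ioi_exp_neg_mul_sub {K : ℝ} (hK : 0 < K) (a : ℝ) :
    IntegrableOn (fun b : ℝ => Real.exp (-(K * (b - a)))) (Ioi a) := by
  refine IntegrableOn.congr_fun (Integrable.const_mul (exp_neg_integrableOn_Ioi a hK)
    (Real.exp (K * a))) (fun b _ => ?_) measurableSet_Ioi
  simp only [← Real.exp_add]
  ring_nf

theorem integral_Ioi_exp_neg_mul_sub {K : ℝ} (hK : 0 < K) (a : ℝ) :
    ∫ b in Ioi a, Real.exp (-(K * (b - a))) = 1 / K := by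
  have h : ∀ b : ℝ, Real.exp (-(K * (b - a))) = Real.exp (K * a) * Real.exp (-K * b) := by
    intro b
    rw [← Real.exp_add]
    ring_nf
  simp_rw [h]
  rw [MeasureTheory.integral_const_mul, integral_exp_mul_Ioi (by linarith) a, neg_div_neg_eq,
    ← mul_div_assoc, ← Real.exp_add]
  simp

theorem setIntegral_Iic_neg_eq_Ioi {v : ℝ → ℝ} (hv : ∀ b, v (-b) = v b) (a : ℝ) :
    ∫ b in Iic (-a), v b = ∫ b in Ioi a, v b := by
  have := integral_comp_neg_Iic (-a) v
  simpa [hv] using this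

theorem measurable_setIntegral_Iic {v : ℝ → ℝ} (hv : Integrable v) (h0 : ∀ b, 0 ≤ v b) :
    Measurable fun a : ℝ => ∫ b in Iic a, v b := by
  refine Monotone.measurable fun a a' h => ?_
  exact setIntegral_mono_set hv.integrableOn (ae_of_all _ h0)
    (Iic_subset_Iic.2 h).eventuallyLE

theorem setIntegral_pos_of_forall_pos {v : ℝ → ℝ} {s : Set ℝ}
    (hs0 : 0 < volume s) (hv : IntegrableOn v s) (h0 : ∀ b, 0 < v b) : 0 < ∫ b in s, v b := by
  rw [setIntegral_pos_iff_support_of_nonneg_ae (ae_of_all _ fun b => (h0 b).le) hv]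
  have : Function.support v = univ := by
    ext b; simp [(h0 b).ne']
  simpa [this] using hs0

theorem integral_eq_two_mul_setIntegral_Ioi {Φ : ℝ → ℝ} (h : ∀ a, Φ (-a) = Φ a) :
    ∫ a, Φ a = 2 * ∫ a in Ioi 0, Φ a := by
  rw [← integral_comp_abs]
  congr 1
  ext a
  rcases abs_choice a with h' | h' <;> simp [h', h]

/-- Convergence of the mean exit functional `∫ H(a) H(-a) / w(a) da / H(∞)`, `H(x) = ∫_{-∞}^x w`,
along a sequence of even weights converging pointwise with a uniform decay rate; the limit is
positive. -/
theorem tendsto_integral_mul_div_of_decay {w : ℕ → ℝ → ℝ} {v : ℝ → ℝ}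
    (hw : ∀ m, Measurable (w m)) (h0 : ∀ m b, 0 ≤ w m b) (heven : ∀ m b, w m (-b) = w m b)
    {C c : ℝ} (hC : 0 < C) (hc : 0 < c) (hw1 : ∀ᶠ m in atTop, w m 0 ≤ 1)
    (hdecay : ∀ᶠ m in atTop, ∀ a u, 0 ≤ a → 0 ≤ u →
      w m (a + u) ≤ w m a * (C * Real.exp (-(c * (1 + a ^ 2) * u))))
    (hv : ∀ b, 0 < v b) (hlim : ∀ b, Tendsto (fun m => w m b) atTop (𝓝 (v b))) :
    (0 < ∫ a in Ioi 0, (∫ b in Iic a, v b) * (∫ b in Iic (-a), v b) / v a) ∧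
    Tendsto (fun m => (∫ a, (∫ b in Iic a, w m b) * (∫ b in Iic (-a), w m b) / w m a)
        / ∫ b, w m b) atTop
      (𝓝 ((2 * ∫ a in Ioi 0, (∫ b in Iic a, v b) * (∫ b in Iic (-a), v b) / v a)
        / ∫ b, v b)) := by
  set B : ℝ → ℝ := fun b => C * Real.exp (-(c * |b|)) with hB
  have hBint : Integrable B := (integrable_exp_neg_mul_abs hc).const_mul C
  have hB0 : ∀ b, 0 ≤ B b := fun b => by positivity
  have hwabs : ∀ m b, w m |b| = w m b := by
    intro m b
    rcases abs_choice b with h' | h' <;> simp [h', heven]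
  have hwB : ∀ᶠ m in atTop, ∀ b, w m b ≤ B b := by
    filter_upwards [hw1, hdecay] with m h1 hd b
    have := hd 0 |b| le_rfl (abs_nonneg b)
    simp only [zero_add, hwabs] at this
    refine this.trans ?_
    simp only [hB]
    calc w m 0 * (C * Real.exp (-(c * (1 + 0 ^ 2) * |b|)))
        ≤ 1 * (C * Real.exp (-(c * (1 + 0 ^ 2) * |b|))) := by gcongr
      _ = _ := by norm_num
  have hvB : ∀ b, v b ≤ B b := fun b =>
    le_of_tendsto (hlim b) (hwB.mono fun m hm => hm b)
  have hvmeas : Measurable v :=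
    measurable_of_tendsto_metrizable hw (tendsto_pi_nhds.2 hlim)
  have hvint : Integrable v := hBint.mono' hvmeas.aestronglyMeasurable
    (ae_of_all _ fun b => by rw [Real.norm_of_nonneg (hv b).le]; exact hvB b)
  have hwint : ∀ᶠ m in atTop, Integrable (w m) := by
    filter_upwards [hwB] with m hm
    exact hBint.mono' (hw m).aestronglyMeasurable
      (ae_of_all _ fun b => by rw [Real.norm_of_nonneg (h0 m b)]; exact hm b)
  have hH : ∀ s : Set ℝ, Tendsto (fun m => ∫ b in s, w m b) atTop (𝓝 (∫ b in s, v b)) := by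
    intro s
    refine tendsto_integral_filter_of_dominated_convergence B
      (Eventually.of_forall fun m => (hw m).aestronglyMeasurable) ?_ hBint.integrableOn
      (ae_of_all _ hlim)
    filter_upwards [hwB] with m hm
    exact ae_of_all _ fun b => by rw [Real.norm_of_nonneg (h0 m b)]; exact hm b
  have hvpos : 0 < ∫ b, v b := by
    simpa using setIntegral_pos_of_forall_pos (s := univ) (by simp) hvint.integrableOn hv
  have hbound : ∀ᶠ m in atTop, ∀ a, 0 < a →
      ‖(∫ b in Iic a, w m b) * (∫ b in Iic (-a), w m b) / w m a‖
        ≤ (∫ b, B b) * (C / c) * (1 + a ^ 2)⁻¹ := by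
    filter_upwards [hwint, hwB, hdecay] with m hm hmB hd a ha
    have hn : ∀ x, 0 ≤ ∫ b in Iic x, w m b := fun x => integral_nonneg (h0 m)
    have hK : 0 < c * (1 + a ^ 2) := by positivity
    rw [Real.norm_of_nonneg (div_nonneg (mul_nonneg (hn _) (hn _)) (h0 m a)), mul_div_assoc,
      mul_assoc]
    refine mul_le_mul ?_ ?_ (div_nonneg (hn _) (h0 m a)) (integral_nonneg hB0)
    · calc ∫ b in Iic a, w m b ≤ ∫ b, w m b :=
            setIntegral_le_integral hm (ae_of_all _ (h0 m))
        _ ≤ ∫ b, B b := integral_mono hm hBint hmB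
    · have key : ∫ b in Iic (-a), w m b ≤ w m a * C * (1 / (c * (1 + a ^ 2))) := by
        rw [setIntegral_Iic_neg_eq_Ioi (heven m), ← integral_Ioi_exp_neg_mul_sub hK a,
          ← MeasureTheory.integral_const_mul]
        refine setIntegral_mono_on hm.integrableOn
          ((integrableOn_Ioi_exp_neg_mul_sub hK a).const_mul _) measurableSet_Ioi fun b hb => ?_
        have := hd a (b - a) ha.le (sub_nonneg.2 (le_of_lt hb))
        rw [add_sub_cancel] at this
        rwa [mul_assoc]
      rcases (h0 m a).eq_or_lt with h | h
      · rw [← h, div_zero]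
        positivity
      · rw [div_le_iff₀ h]
        refine key.trans (le_of_eq ?_)
        field_simp
  have hlimF : ∀ a, Tendsto (fun m => (∫ b in Iic a, w m b) * (∫ b in Iic (-a), w m b) / w m a)
      atTop (𝓝 ((∫ b in Iic a, v b) * (∫ b in Iic (-a), v b) / v a)) := fun a =>
    ((hH _).mul (hH _)).div (hlim a) (hv a).ne'
  have hbint : Integrable fun a : ℝ => (∫ b, B b) * (C / c) * (1 + a ^ 2)⁻¹ :=
    integrable_inv_one_add_sq.const_mul _
  have hVmeas := measurable_setIntegral_Iic hvint fun b => (hv b).le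
  have hVpos := fun a => setIntegral_pos_of_forall_pos
    (s := Iic a) (by simp) hvint.integrableOn hv
  have hFint : IntegrableOn (fun a => (∫ b in Iic a, v b) * (∫ b in Iic (-a), v b) / v a)
      (Ioi 0) := by
    refine hbint.integrableOn.mono'
      ((hVmeas.mul (hVmeas.comp measurable_neg)).div hvmeas).aestronglyMeasurable ?_
    rw [ae_restrict_iff' measurableSet_Ioi]
    exact ae_of_all _ fun a ha => le_of_tendsto (hlimF a).norm (hbound.mono fun m hm => hm a ha)
  have hFpos : 0 < ∫ a in Ioi 0, (∫ b in Iic a, v b) * (∫ b in Iic (-a), v b) / v a :=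
    setIntegral_pos_of_forall_pos (by simp) hFint fun a =>
      div_pos (mul_pos (hVpos a) (hVpos _)) (hv a)
  refine ⟨hFpos, ?_⟩
  refine Tendsto.div ?_ (by simpa using hH univ) hvpos.ne'
  have hsym : ∀ m, (∫ a, (∫ b in Iic a, w m b) * (∫ b in Iic (-a), w m b) / w m a)
      = 2 * ∫ a in Ioi 0, (∫ b in Iic a, w m b) * (∫ b in Iic (-a), w m b) / w m a := by
    intro m
    refine integral_eq_two_mul_setIntegral_Ioi fun a => ?_
    rw [neg_neg, heven, mul_comm (∫ b in Iic (-a), w m b)]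
  simp_rw [hsym]
  refine Tendsto.const_mul 2 ?_
  refine tendsto_integral_filter_of_dominated_convergence
    (fun a => (∫ b, B b) * (C / c) * (1 + a ^ 2)⁻¹) ?_ ?_
    hbint.integrableOn (ae_of_all _ hlimF)
  · filter_upwards [hwint] with m hm
    have h1 := measurable_setIntegral_Iic hm (h0 m)
    exact ((h1.mul (h1.comp measurable_neg)).div (hw m)).aestronglyMeasurable
  · filter_upwards [hbound] with m hm
    rw [ae_restrict_iff' measurableSet_Ioi]
    exact ae_of_all _ hm

theorem ConcaveOn.antitoneOn_of_even {g : ℝ → ℝ} {l : ℝ} (hg : ConcaveOn ℝ (Icc (-l) l) g)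
    (heven : ∀ h, g (-h) = g h) : AntitoneOn g (Icc 0 l) := by
  intro x hx y hy hxy
  have hmem : ∀ z ∈ Icc 0 l, z ∈ Icc (-l) l := fun z hz => ⟨by linarith [hz.1, hz.2], hz.2⟩
  rcases hxy.eq_or_lt with rfl | hxy
  · rfl
  have hy0 : 0 < y := hx.1.trans_lt hxy
  have := hg.2 (⟨by linarith [hy.2], by linarith [hy.2]⟩ : -y ∈ Icc (-l) l) (hmem y hy)
    (show 0 ≤ (y - x) / (2 * y) from div_nonneg (by linarith) (by linarith))
    (show 0 ≤ (y + x) / (2 * y) from div_nonneg (by linarith [hx.1]) (by linarith))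
    (by field_simp; ring)
  simp only [smul_eq_mul, heven] at this
  have e1 : (y - x) / (2 * y) * -y + (y + x) / (2 * y) * y = x := by field_simp; ring
  have e2 : (y - x) / (2 * y) * g y + (y + x) / (2 * y) * g y = g y := by field_simp; ring
  rwa [e1, e2] at this

/-- A profile with a flat maximum `1` at `0` of order `p`, normalised as `1 - (h / A) ^ p`. -/
structure IsFlatProfile (g : ℝ → ℝ) (l A : ℝ) (p : ℕ) : Prop where
  l_pos : 0 < l
  A_pos : 0 < A
  continuous : Continuous g
  map_zero : g 0 = 1
  even : ∀ h, g (-h) = g h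
  concaveOn : ConcaveOn ℝ (Icc (-l) l) g
  pos : ∀ h ∈ Ioo (-l) l, 0 < g h
  tendsto : Tendsto (fun h => (1 - g h) / h ^ p) (𝓝[≠] 0) (𝓝 (1 / A ^ p))

namespace IsFlatProfile

variable {g : ℝ → ℝ} {l A : ℝ} {p : ℕ}

theorem exists_mul_pow_le (hg : IsFlatProfile g l A p) :
    ∃ κ > 0, ∀ x ∈ Icc 0 l, κ * x ^ p ≤ 1 - g x := by
  have hA := hg.A_pos
  have hl := hg.l_pos
  have hanti := hg.concaveOn.antitoneOn_of_even hg.even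
  have hq : 0 < 1 / A ^ p := by positivity
  have hev := hg.tendsto.eventually (lt_mem_nhds (half_lt_self hq))
  rw [eventually_nhdsWithin_iff, Metric.eventually_nhds_iff] at hev
  obtain ⟨δ, hδ, hev⟩ := hev
  set d := min (δ / 2) l with hd
  have hd0 : 0 < d := lt_min (by linarith) hl
  have hdl : d ≤ l := min_le_right _ _
  have hnear : ∀ x, 0 < x → x ≤ d → 1 / A ^ p / 2 * x ^ p ≤ 1 - g x := by
    intro x hx hxd
    have hxδ : x < δ := by
      have := min_le_left (δ / 2) l
      linarith
    have := hev (y := x) (by simpa [abs_of_pos hx] using hxδ) hx.ne'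
    rw [lt_div_iff₀ (by positivity)] at this
    exact this.le
  refine ⟨1 / A ^ p / 2 * (d / l) ^ p, by positivity, fun x hx => ?_⟩
  rcases hx.1.eq_or_lt with rfl | hx0
  · have := hnear d hd0 le_rfl
    rcases Nat.eq_zero_or_pos p with hp | hp
    · exfalso
      subst hp
      have h0 : Continuous fun h => (1 - g h) / h ^ 0 := by
        simp only [pow_zero, div_one]
        exact continuous_const.sub hg.continuous
      have h1 := (h0.tendsto 0).mono_left (nhdsWithin_le_nhds (s := {0}ᶜ))
      have := tendsto_nhds_unique hg.tendsto h1
      simp [hg.map_zero] at this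
    · simp [hg.map_zero, hp.ne']
  rcases le_total x d with hxd | hxd
  · refine le_trans ?_ (hnear x hx0 hxd)
    have : (d / l) ^ p ≤ 1 := pow_le_one₀ (by positivity) (by rwa [div_le_one hl])
    calc _ ≤ 1 / A ^ p / 2 * 1 * x ^ p := by gcongr
      _ = _ := by ring
  · have h1 : g x ≤ g d := hanti ⟨hd0.le, hdl⟩ hx hxd
    calc 1 / A ^ p / 2 * (d / l) ^ p * x ^ p ≤ 1 / A ^ p / 2 * (d / l) ^ p * l ^ p := by
          gcongr; exact hx.2
      _ = 1 / A ^ p / 2 * d ^ p := by rw [div_pow]; field_simp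
      _ ≤ 1 - g d := hnear d hd0 le_rfl
      _ ≤ 1 - g x := by linarith

theorem le_one (hg : IsFlatProfile g l A p) {x : ℝ} (hx : x ∈ Icc 0 l) : g x ≤ 1 := by
  rw [← hg.map_zero]
  exact hg.concaveOn.antitoneOn_of_even hg.even ⟨le_rfl, hg.l_pos.le⟩ hx hx.1

theorem exists_le_mul_exp (hg : IsFlatProfile g l A (p + 1)) :
    ∃ κ > 0, ∀ x y, 0 ≤ x → x ≤ y → y < l →
      g y ≤ g x * Real.exp (-(κ * ((y - x) * x ^ p))) := by
  obtain ⟨κ, hκ, h⟩ := hg.exists_mul_pow_le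
  refine ⟨κ, hκ, fun x y hx hxy hy => ?_⟩
  have hgx := hg.pos x ⟨by linarith [hg.l_pos], by linarith⟩
  have hgx1 := hg.le_one (x := x) ⟨hx, by linarith⟩
  have hanti := hg.concaveOn.antitoneOn_of_even hg.even ⟨hx, by linarith⟩
    ⟨by linarith, hy.le⟩ hxy
  rcases hx.eq_or_lt with rfl | hx0
  · rcases Nat.eq_zero_or_pos p with rfl | hp
    · have := h y ⟨by linarith, hy.le⟩
      rw [hg.map_zero]
      have h2 := Real.add_one_le_exp (-(κ * ((y - 0) * 0 ^ 0)))
      simp only [sub_zero, pow_zero, mul_one, zero_add, pow_one, one_mul] at *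
      linarith
    · simpa [hp.ne'] using hanti
  have hy0 : 0 < y := by linarith
  have hconc := hg.concaveOn.2 (⟨by linarith, by linarith⟩ : (0 : ℝ) ∈ Icc (-l) l)
    (⟨by linarith, by linarith⟩ : y ∈ Icc (-l) l)
    (show 0 ≤ (y - x) / y from div_nonneg (by linarith) (by linarith))
    (show 0 ≤ x / y from div_nonneg (by linarith) (by linarith)) (by field_simp; ring)
  simp only [smul_eq_mul, mul_zero, zero_add, hg.map_zero, mul_one] at hconc
  rw [div_mul_cancel₀ _ hy0.ne', div_mul_eq_mul_div, ← add_div, div_le_iff₀ hy0] at hconc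
  have hx1 := h x ⟨hx, by linarith⟩
  have h1 : x * (κ * ((y - x) * x ^ p)) ≤ x * (g x - g y) := by
    calc x * (κ * ((y - x) * x ^ p)) = (y - x) * (κ * x ^ (p + 1)) := by ring
      _ ≤ (y - x) * (1 - g x) := mul_le_mul_of_nonneg_left hx1 (by linarith)
      _ ≤ x * (g x - g y) := by linarith
  have h2 : κ * ((y - x) * x ^ p) ≤ g x - g y := le_of_mul_le_mul_left h1 hx0
  have ht : 0 ≤ κ * ((y - x) * x ^ p) :=
    mul_nonneg hκ.le (mul_nonneg (by linarith) (by positivity))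
  calc g y ≤ g x - κ * ((y - x) * x ^ p) := by linarith
    _ ≤ g x * (-(κ * ((y - x) * x ^ p)) + 1) := by nlinarith
    _ ≤ _ := mul_le_mul_of_nonneg_left (Real.add_one_le_exp _) hgx.le

/-- The `m`-th power of a profile, cut off to `(-l, l)` and rescaled by `e`. -/
def weight (g : ℝ → ℝ) (l e : ℝ) (m : ℕ) (b : ℝ) : ℝ :=
  (Ioo (-l) l).indicator (fun h => g h ^ m) (e * b)

theorem weight_of_mem {e : ℝ} (m : ℕ) {b : ℝ} (h : e * b ∈ Ioo (-l) l) :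
    weight g l e m b = g (e * b) ^ m := indicator_of_mem h _

theorem weight_of_notMem {e : ℝ} (m : ℕ) {b : ℝ} (h : e * b ∉ Ioo (-l) l) :
    weight g l e m b = 0 := indicator_of_notMem h _

theorem measurable_weight (hg : Continuous g) (e : ℝ) (m : ℕ) : Measurable (weight g l e m) :=
  ((hg.pow m).measurable.indicator measurableSet_Ioo).comp (measurable_const_mul e)

theorem weight_nonneg (hg : IsFlatProfile g l A p) (e : ℝ) (m : ℕ) (b : ℝ) :
    0 ≤ weight g l e m b :=
  indicator_nonneg (fun h hh => (pow_pos (hg.pos h hh) m).le) _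

theorem weight_neg (hg : IsFlatProfile g l A p) (e : ℝ) (m : ℕ) (b : ℝ) :
    weight g l e m (-b) = weight g l e m b := by
  have : e * -b ∈ Ioo (-l) l ↔ e * b ∈ Ioo (-l) l := by
    simp only [mem_Ioo]
    constructor <;> rintro ⟨h1, h2⟩ <;> constructor <;> linarith
  by_cases h : e * b ∈ Ioo (-l) l
  · rw [weight_of_mem m h, weight_of_mem m (this.2 h), mul_neg, hg.even]
  · rw [weight_of_notMem m h, weight_of_notMem m (mt this.1 h)]

theorem tendsto_weight (hg : IsFlatProfile g l A p) (hp : p ≠ 0) {e : ℕ → ℝ}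
    (he : ∀ᶠ m in atTop, 0 < e m) (he0 : Tendsto e atTop (𝓝 0))
    (hscale : ∀ᶠ m : ℕ in atTop, m * e m ^ p = A ^ p) (b : ℝ) :
    Tendsto (fun m => weight g l (e m) m b) atTop (𝓝 (Real.exp (-(b ^ p)))) := by
  have hA := hg.A_pos
  have heb : Tendsto (fun m => e m * b) atTop (𝓝 0) := by simpa using he0.mul_const b
  have hmem : ∀ᶠ m in atTop, e m * b ∈ Ioo (-l) l :=
    heb.eventually (Ioo_mem_nhds (by linarith [hg.l_pos]) hg.l_pos)
  have hmain : Tendsto (fun m : ℕ => (m : ℝ) * (g (e m * b) - 1)) atTop (𝓝 (-(b ^ p))) := by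
    rcases eq_or_ne b 0 with rfl | hb
    · simp [hg.map_zero, hp]
    have h1 : Tendsto (fun m => e m * b) atTop (𝓝[≠] 0) :=
      tendsto_nhdsWithin_iff.2 ⟨heb, he.mono fun m hm => mul_ne_zero hm.ne' hb⟩
    have h2 := ((hg.tendsto.comp h1).mul_const (A ^ p * b ^ p)).neg
    have h3 : -(1 / A ^ p * (A ^ p * b ^ p)) = -(b ^ p) := by field_simp
    rw [h3] at h2
    refine h2.congr' ?_
    filter_upwards [hscale, he] with m hm hem
    simp only [Function.comp]
    rw [← hm]
    field_simp
    ring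
  refine (Real.tendsto_one_add_pow_exp_of_tendsto hmain).congr' ?_
  filter_upwards [hmem] with m hm
  rw [weight_of_mem m hm]
  ring

theorem exists_weight_decay (hg : IsFlatProfile g l A (p + 1)) (hp : 2 ≤ p) {e : ℕ → ℝ}
    (he : ∀ᶠ m in atTop, 0 < e m)
    (hscale : ∀ᶠ m : ℕ in atTop, m * e m ^ (p + 1) = A ^ (p + 1)) :
    ∃ C > 0, ∃ c > 0, ∀ᶠ m in atTop, ∀ a u, 0 ≤ a → 0 ≤ u →
      weight g l (e m) m (a + u) ≤
        weight g l (e m) m a * (C * Real.exp (-(c * (1 + a ^ 2) * u))) := by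
  have hA := hg.A_pos
  obtain ⟨κ, hκ, hdec⟩ := hg.exists_le_mul_exp
  set c := κ * A ^ (p + 1) / 2 with hc
  have hc0 : 0 < c := by positivity
  refine ⟨Real.exp (2 * c), Real.exp_pos _, c, hc0, ?_⟩
  filter_upwards [he, hscale] with m hem hm a u ha hu
  set W := weight g l (e m) m with hW
  have hW0 : ∀ b, 0 ≤ W b := hg.weight_nonneg (e m) m
  have hraw : ∀ x y, 0 ≤ x → x ≤ y → W y ≤ W x * Real.exp (-(2 * c * (y - x) * x ^ p)) := by
    intro x y hx hxy
    by_cases hy : e m * y ∈ Ioo (-l) l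
    · have h1 : e m * x ≤ e m * y := by gcongr
      have h2 : 0 ≤ e m * x := by positivity
      have hxm : e m * x ∈ Ioo (-l) l := ⟨by linarith [hg.l_pos], by linarith [hy.2]⟩
      rw [hW, weight_of_mem m hy, weight_of_mem m hxm]
      refine (pow_le_pow_left₀ (hg.pos _ hy).le (hdec _ _ h2 h1 hy.2) m).trans (le_of_eq ?_)
      rw [mul_pow, ← Real.exp_nat_mul]
      congr 2
      have : 2 * c = κ * (m * e m ^ (p + 1)) := by rw [hm, hc]; ring
      rw [this]
      ring
    · rw [hW, weight_of_notMem m hy]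
      exact mul_nonneg (hW0 x) (Real.exp_pos _).le
  have hmono : ∀ x y, 0 ≤ x → x ≤ y → W y ≤ W x := fun x y hx hxy => by
    refine (hraw x y hx hxy).trans (mul_le_of_le_one_right (hW0 x) (Real.exp_le_one_iff.2 ?_))
    have : 0 ≤ 2 * c * (y - x) * x ^ p :=
      mul_nonneg (mul_nonneg (by linarith) (by linarith)) (by positivity)
    linarith
  rw [← Real.exp_add]
  rcases le_total 1 a with ha1 | ha1
  · refine (hraw a (a + u) ha (by linarith)).trans ?_
    refine mul_le_mul_of_nonneg_left (Real.exp_le_exp.2 ?_) (hW0 a)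
    have h1 : a ^ 2 ≤ a ^ p := pow_le_pow_right₀ ha1 hp
    have h2 : 1 ≤ a ^ p := one_le_pow₀ ha1
    have h3 : c * u * (1 + a ^ 2) ≤ c * u * (2 * a ^ p) := by gcongr; linarith
    rw [add_sub_cancel_left]
    nlinarith
  · have h4 : c * u * (1 + a ^ 2) ≤ c * u * 2 := by gcongr; nlinarith
    rcases le_total (a + u) 1 with hau | hau
    · refine (hmono a (a + u) ha (by linarith)).trans ?_
      refine le_mul_of_one_le_right (hW0 a) (Real.one_le_exp ?_)
      have : c * u ≤ c * 1 := by gcongr; linarith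
      nlinarith
    · calc W (a + u) ≤ W 1 * Real.exp (-(2 * c * (a + u - 1) * 1 ^ p)) :=
            hraw 1 (a + u) zero_le_one hau
        _ ≤ W a * Real.exp (-(2 * c * (a + u - 1) * 1 ^ p)) := by
            gcongr; exact hmono a 1 ha ha1
        _ ≤ _ := by
            refine mul_le_mul_of_nonneg_left (Real.exp_le_exp.2 ?_) (hW0 a)
            rw [one_pow]
            have : 0 ≤ c * a := by positivity
            nlinarith

/-- Limit of the rescaled exit functional of the powers of a flat profile, and its positivity. -/
theorem tendsto_integral_weight (hg : IsFlatProfile g l A (p + 1)) (hp : 2 ≤ p) {e : ℕ → ℝ}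
    (he : ∀ᶠ m in atTop, 0 < e m) (he0 : Tendsto e atTop (𝓝 0))
    (hscale : ∀ᶠ m : ℕ in atTop, m * e m ^ (p + 1) = A ^ (p + 1)) :
    (0 < ∫ a in Ioi 0, (∫ b in Iic a, Real.exp (-(b ^ (p + 1))))
      * (∫ b in Iic (-a), Real.exp (-(b ^ (p + 1)))) / Real.exp (-(a ^ (p + 1)))) ∧
    Tendsto (fun m => (∫ a, (∫ b in Iic a, weight g l (e m) m b)
        * (∫ b in Iic (-a), weight g l (e m) m b) / weight g l (e m) m a)
        / ∫ b, weight g l (e m) m b) atTop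
      (𝓝 ((2 * ∫ a in Ioi 0, (∫ b in Iic a, Real.exp (-(b ^ (p + 1))))
        * (∫ b in Iic (-a), Real.exp (-(b ^ (p + 1)))) / Real.exp (-(a ^ (p + 1))))
        / ∫ b, Real.exp (-(b ^ (p + 1))))) := by
  obtain ⟨C, hC, c, hc, hdecay⟩ := hg.exists_weight_decay hp he hscale
  refine tendsto_integral_mul_div_of_decay (w := fun m => weight g l (e m) m)
    (fun m => measurable_weight hg.continuous _ _)
    (fun m => hg.weight_nonneg _ _) (fun m => hg.weight_neg _ _) hC hc
    (Eventually.of_forall fun m => ?_) hdecay (fun b => Real.exp_pos _)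
    (hg.tendsto_weight (Nat.succ_ne_zero p) he he0 hscale)
  have : e m * 0 ∈ Ioo (-l) l := by simpa using hg.l_pos
  simp only [weight_of_mem m this, mul_zero, hg.map_zero, one_pow, le_refl]

end IsFlatProfile

theorem IsFlatProfile.setIntegral_Iic_weight {g : ℝ → ℝ} {l e x : ℝ} (he : 0 < e)
    (hx : -l ≤ e * x) (hx' : e * x ≤ l) (m : ℕ) :
    ∫ b in Iic x, weight g l e m b = e⁻¹ * ∫ h in (-l)..(e * x), g h ^ m := by
  set φ : ℝ → ℝ := (Iic (e * x)).indicator ((Ioo (-l) l).indicator fun h => g h ^ m) with hφ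
  have h1 : ∀ b, (Iic x).indicator (weight g l e m) b = φ (e * b) := by
    intro b
    have : e * b ∈ Iic (e * x) ↔ b ∈ Iic x := mul_le_mul_iff_right₀ he
    by_cases hb : b ∈ Iic x
    · rw [indicator_of_mem hb, hφ, indicator_of_mem (this.2 hb), weight]
    · rw [indicator_of_notMem hb, hφ, indicator_of_notMem (mt this.1 hb)]
  rw [← MeasureTheory.integral_indicator measurableSet_Iic]
  simp_rw [h1]
  rw [Measure.integral_comp_mul_left, abs_of_pos (inv_pos.2 he), smul_eq_mul, hφ,
    MeasureTheory.integral_indicator measurableSet_Iic, setIntegral_indicator measurableSet_Ioo,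
    intervalIntegral.integral_of_le hx]
  congr 1
  refine setIntegral_congr_set ?_
  have : Ioc (-l) (e * x) = Iic (e * x) ∩ Ioc (-l) l := by
    ext z
    simp only [mem_Ioc, mem_inter_iff, mem_Iic]
    constructor
    · rintro ⟨h1, h2⟩; exact ⟨h2, h1, h2.trans hx'⟩
    · rintro ⟨h1, h2, _⟩; exact ⟨h2, h1⟩
  rw [this]
  exact (ae_eq_refl _).inter Ioo_ae_eq_Ioc

theorem IsFlatProfile.integral_weight {g : ℝ → ℝ} {l e : ℝ} (he : 0 < e) (hl : 0 < l) (m : ℕ) :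
    ∫ b, weight g l e m b = e⁻¹ * ∫ h in (-l)..l, g h ^ m := by
  have h := setIntegral_Iic_weight (g := g) (x := l / e) he
    (by rw [mul_div_cancel₀ _ he.ne']; linarith) (by rw [mul_div_cancel₀ _ he.ne']) m
  rw [mul_div_cancel₀ _ he.ne'] at h
  rw [← h, setIntegral_eq_integral_of_forall_compl_eq_zero]
  intro b hb
  refine weight_of_notMem m fun hm => hb ?_
  rw [mem_Iic, le_div_iff₀' he]
  exact hm.2.le

/-- The mean exit functional of `f ^ m` in terms of the rescaled powers of the profile of `f`. -/
theorem integral_exit_eq {f : ℝ → ℝ} {L : ℝ} (hL : 0 < L) (hf : Continuous f)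
    (hpos : ∀ s ∈ Ioo 0 L, 0 < f s) (hsym : ∀ s, f (L - s) = f s) (m : ℕ) {e : ℝ} (he : 0 < e)
    {J : ℝ → ℝ} (hJ : ∀ r, J r = ∫ s in (0 : ℝ)..r, f s ^ m) {w : ℝ → ℝ}
    (hw : w = IsFlatProfile.weight (fun h => f (L / 2 + h) / f (L / 2)) (L / 2) e m) :
    ∫ s in (0 : ℝ)..L, J s / f s ^ m * ((J L - J s) / J L)
      = e ^ 2 * ((∫ a, (∫ b in Iic a, w b) * (∫ b in Iic (-a), w b) / w a) / ∫ b, w b) := by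
  have hM : 0 < f (L / 2) := hpos _ ⟨by linarith, by linarith⟩
  set M := f (L / 2) with hMdef
  have hprim : ∀ r, ∫ h in (-(L / 2))..(r - L / 2), (f (L / 2 + h) / M) ^ m = J r / M ^ m := by
    intro r
    have := intervalIntegral.integral_comp_sub_right (a := 0) (b := r)
      (fun h => (f (L / 2 + h) / M) ^ m) (L / 2)
    rw [zero_sub] at this
    rw [← this, hJ, ← intervalIntegral.integral_div]
    simp only [add_sub_cancel, div_pow]
  have hH : ∀ s ∈ Icc 0 L, J s = M ^ m * e * ∫ b in Iic ((s - L / 2) / e), w b := by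
    intro s hs
    rw [hw, IsFlatProfile.setIntegral_Iic_weight he
      (by rw [mul_div_cancel₀ _ he.ne']; linarith [hs.1])
      (by rw [mul_div_cancel₀ _ he.ne']; linarith [hs.2]), mul_div_cancel₀ _ he.ne', hprim]
    field_simp
  have hHL : J L = M ^ m * e * ∫ b, w b := by
    have := hprim L
    rw [show L - L / 2 = L / 2 by ring] at this
    rw [hw, IsFlatProfile.integral_weight he (by linarith), this]
    field_simp
  have hrefl : ∀ s, J L - J s = J (L - s) := by
    intro s
    have hi : ∀ a b, IntervalIntegrable (fun s => f s ^ m) volume a b :=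
      fun a b => (hf.pow m).intervalIntegrable a b
    have := intervalIntegral.integral_comp_sub_left (a := 0) (b := L - s) (fun s => f s ^ m) L
    simp only [hsym, sub_zero, sub_sub_cancel] at this
    rw [hJ (L - s), this, hJ, hJ, intervalIntegral.integral_interval_sub_left (hi _ _) (hi _ _)]
  set Φ : ℝ → ℝ := fun a => (∫ b in Iic a, w b) * (∫ b in Iic (-a), w b) / w a with hΦ
  have hpt : ∀ s, (Ioo 0 L).indicator (fun s => J s / f s ^ m * ((J L - J s) / J L)) s
      = e * Φ ((s - L / 2) / e) / ∫ b, w b := by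
    intro s
    have hes : e * ((s - L / 2) / e) = s - L / 2 := mul_div_cancel₀ _ he.ne'
    by_cases hs : s ∈ Ioo 0 L
    · have hws : w ((s - L / 2) / e) = f s ^ m / M ^ m := by
        rw [hw, IsFlatProfile.weight_of_mem, hes, add_sub_cancel, div_pow]
        rw [hes]
        exact ⟨by linarith [hs.1], by linarith [hs.2]⟩
      have hfs : f s ≠ 0 := (hpos s hs).ne'
      rw [indicator_of_mem hs, hrefl, hH s ⟨hs.1.le, hs.2.le⟩,
        hH (L - s) ⟨by linarith [hs.2], by linarith [hs.1]⟩, hHL, hΦ]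
      simp only
      rw [hws, show -((s - L / 2) / e) = (L - s - L / 2) / e by ring]
      field_simp
    · have hws : w ((s - L / 2) / e) = 0 := by
        rw [hw, IsFlatProfile.weight_of_notMem]
        rw [hes]
        exact fun h => hs ⟨by linarith [h.1], by linarith [h.2]⟩
      rw [indicator_of_notMem hs, hΦ]
      simp only
      rw [hws]
      simp
  rw [intervalIntegral.integral_of_le hL.le, integral_Ioc_eq_integral_Ioo,
    ← MeasureTheory.integral_indicator measurableSet_Ioo]
  simp_rw [hpt]
  rw [MeasureTheory.integral_div, MeasureTheory.integral_const_mul,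
    integral_sub_right_eq_self (fun s => Φ (s / e)) (L / 2), Measure.integral_comp_div,
    abs_of_pos he, smul_eq_mul]
  ring

theorem concaveOn_Icc_of_deriv2_nonpos_of_ne {f : ℝ → ℝ} {a b c : ℝ} (hf : ContDiff ℝ 2 f)
    (h : ∀ s ∈ Icc a b, s ≠ c → deriv (deriv f) s ≤ 0) : ConcaveOn ℝ (Icc a b) f := by
  have h1 : ContDiff ℝ 1 (deriv f) := hf.iterate_deriv' 1 1
  have h2 : Continuous (deriv (deriv f)) := h1.continuous_deriv le_rfl
  refine concaveOn_of_deriv2_nonpos (convex_Icc a b) hf.continuous.continuousOn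
    (hf.differentiable (by norm_num)).differentiableOn
    (h1.differentiable (by norm_num)).differentiableOn fun x hx => ?_
  rw [interior_Icc] at hx
  refine le_of_tendsto ((h2.tendsto x).mono_left (nhdsWithin_le_nhds (s := {x}ᶜ))) ?_
  have e1 : ∀ᶠ y in 𝓝[≠] x, y ∈ Icc a b := nhdsWithin_le_nhds (Icc_mem_nhds hx.1 hx.2)
  have e2 : ∀ᶠ y in 𝓝[≠] x, y ≠ c := by
    rcases eq_or_ne x c with rfl | hxc
    · exact eventually_mem_nhdsWithin
    · exact nhdsWithin_le_nhds (isOpen_ne.mem_nhds hxc)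
  filter_upwards [e1, e2] with y hy hyc using h y hy hyc

theorem integral_exp_neg_even_pow {k : ℕ} (hk : k ≠ 0) :
    ∫ b : ℝ, Real.exp (-(b ^ (2 * k))) = Real.Gamma (1 / (2 * k : ℝ)) / k := by
  have hk0 : (0 : ℝ) < k := by positivity
  rw [integral_eq_two_mul_setIntegral_Ioi fun a => by rw [(even_two_mul k).neg_pow]]
  have := integral_exp_neg_rpow (p := ((2 * k : ℕ) : ℝ)) (by positivity)
  simp only [Real.rpow_natCast] at this
  push_cast at this
  rw [this, Real.Gamma_add_one (by positivity)]
  field_simp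

theorem isFlatProfile_of_symm {f : ℝ → ℝ} {L D : ℝ} {p : ℕ} (hL : 0 < L) (hp : p ≠ 0)
    (hf : Continuous f) (hconc : ConcaveOn ℝ (Icc 0 L) f)
    (hpos : ∀ s ∈ Ioo 0 L, 0 < f s) (hsym : ∀ s, f (L - s) = f s)
    (hexp : (fun h : ℝ => f (L / 2 + h) - f (L / 2) - D * h ^ p) =o[𝓝 0] fun h : ℝ => h ^ p)
    (hneg : D < 0) :
    IsFlatProfile (fun h => f (L / 2 + h) / f (L / 2)) (L / 2)
      ((f (L / 2) / |D|) ^ (1 / (p : ℝ))) p := by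
  have hM : 0 < f (L / 2) := hpos _ ⟨by linarith, by linarith⟩
  have hD : 0 < |D| := abs_pos.2 hneg.ne
  refine ⟨by linarith, by positivity, ?_, by simp [hM.ne'], fun h => ?_, ?_, fun h hh => ?_, ?_⟩
  · exact (hf.comp (continuous_const.add continuous_id)).div_const _
  · rw [← hsym (L / 2 + h)]
    ring_nf
  · have h1 := (hconc.translate_right (L / 2)).smul (inv_pos.2 hM).le
    rw [Set.preimage_const_add_Icc, zero_sub, show L - L / 2 = L / 2 by ring] at h1
    refine h1.congr fun h _ => ?_
    simp [div_eq_inv_mul]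
  · exact div_pos (hpos _ ⟨by linarith [hh.1], by linarith [hh.2]⟩) hM
  · have hA : ((f (L / 2) / |D|) ^ (1 / (p : ℝ))) ^ p = f (L / 2) / |D| := by
      rw [one_div]
      exact Real.rpow_inv_natCast_pow (by positivity) hp
    have h1 := (hexp.tendsto_div_nhds_zero.mono_left (nhdsWithin_le_nhds (s := {0}ᶜ))).const_mul
      (-(f (L / 2))⁻¹) |>.sub_const (D / f (L / 2))
    rw [hA, one_div_div, abs_of_neg hneg, neg_div]
    rw [mul_zero, zero_sub] at h1
    refine h1.congr' ?_
    filter_upwards [eventually_mem_nhdsWithin] with h hh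
    have : h ≠ 0 := hh
    field_simp
    ring

theorem isEquivalent_sq_mul_rpow_pred {A : ℝ} {k : ℕ} (hk : k ≠ 0) :
    (fun n : ℕ => (A * ((n - 1 : ℕ) : ℝ) ^ (-(1 / (2 * k : ℝ)))) ^ 2) ~[atTop]
      fun n : ℕ => A ^ 2 / (n : ℝ) ^ (1 / (k : ℝ)) := by
  have hk0 : (0 : ℝ) < k := by positivity
  have h0 : (fun n : ℕ => ((n - 1 : ℕ) : ℝ)) ~[atTop] fun n : ℕ => (n : ℝ) := by
    have h1 : (fun n : ℕ => (n : ℝ) + -1) ~[atTop] fun n : ℕ => (n : ℝ) :=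
      IsEquivalent.refl.add_isLittleO (isLittleO_const_left.2 (Or.inr
        (tendsto_norm_atTop_atTop.comp tendsto_natCast_atTop_atTop)))
    refine h1.congr_left ?_
    filter_upwards [eventually_ge_atTop 1] with n hn
    push_cast [hn]
    ring
  have h1 := h0.rpow (fun n => Nat.cast_nonneg n) (r := -(1 / (k : ℝ)))
  have h2 := (IsEquivalent.refl (u := fun _ : ℕ => A ^ 2) (l := atTop)).mul h1
  refine (h2.congr_left (Eventually.of_forall fun n => ?_)).congr_right
    (Eventually.of_forall fun n => ?_)
  · simp only [Pi.mul_apply, Pi.pow_apply]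
    rw [mul_pow, ← Real.rpow_mul_natCast (Nat.cast_nonneg _)]
    congr 2
    field_simp
    norm_num
  · simp only [Pi.mul_apply, Pi.pow_apply]
    rw [Real.rpow_neg (Nat.cast_nonneg _), ← div_eq_mul_inv]

/-- Degenerate case `k ≥ 2`: `E[τₙ] ~ 2k C(2k) C(f,2k)² / (n^{1/k} Γ(1/(2k)))`. -/
theorem mean_asymptotic_degenerate
    (L : ℝ) (hL : 0 < L) (k : ℕ) (hk : 2 ≤ k) (f : ℝ → ℝ)
    (hf : ContDiff ℝ (2 * k + 1 : ℕ) f)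
    (hpos : ∀ s ∈ Set.Ioo 0 L, 0 < f s)
    (hasymp : Asymptotics.IsEquivalent (𝓝[>] (0:ℝ)) f id)
    (hsym : ∀ s, f (L - s) = f s)
    (hf' : ∀ s ∈ Set.Ico 0 (L / 2), 0 < deriv f s)
    (hf'' : ∀ s ∈ Set.Icc 0 L, s ≠ L / 2 → deriv (deriv f) s ≤ 0)
    (hexp : (fun h : ℝ => f (L / 2 + h) - f (L / 2)
        - iteratedDeriv (2 * k) f (L / 2) / ((2 * k).factorial : ℝ) * h ^ (2 * k))
      =o[𝓝 (0:ℝ)] (fun h : ℝ => h ^ (2 * k)))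
    (hneg : iteratedDeriv (2 * k) f (L / 2) < 0)
    (I : ℕ → ℝ → ℝ)
    (hI : ∀ n r, I n r = ∫ s in (0:ℝ)..r, f s ^ (n - 1))
    {Ω : ℕ → Type*} [∀ n, MeasureSpace (Ω n)]
    [∀ n, IsProbabilityMeasure (volume : Measure (Ω n))]
    (τ : ∀ n, Ω n → ℝ)
    (hE : ∀ n, 2 ≤ n →
      (∫ ω, τ n ω) = ∫ s in (0:ℝ)..L, I n s / f s ^ (n - 1) * ((I n L - I n s) / I n L))
    (Cf C2k : ℝ) (h1 : ℝ → ℝ)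
    (hCf : Cf = (((2 * k).factorial : ℝ) * f (L / 2)
        / |iteratedDeriv (2 * k) f (L / 2)|) ^ ((1 : ℝ) / (2 * k : ℝ)))
    (hh1 : ∀ x, h1 x = ∫ a in Set.Iic x, Real.exp (-(a ^ (2 * k))))
    (hC2k : C2k = ∫ a in Set.Ioi (0:ℝ), h1 a * h1 (-a) * Real.exp (a ^ (2 * k))) :
    Asymptotics.IsEquivalent atTop
      (fun n : ℕ => ∫ ω, τ n ω)
      (fun n : ℕ => 2 * k * C2k * Cf ^ 2
        / ((n : ℝ) ^ ((1 : ℝ) / (k : ℝ)) * Real.Gamma (1 / (2 * k : ℝ)))) := by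
  have hk0 : k ≠ 0 := by omega
  have hkR : (0 : ℝ) < k := by positivity
  have hfc : Continuous f := hf.continuous
  have hconc : ConcaveOn ℝ (Icc 0 L) f := concaveOn_Icc_of_deriv2_nonpos_of_ne
    (hf.of_le (by norm_cast; omega)) hf''
  have hprof := isFlatProfile_of_symm hL (p := 2 * k) (by omega) hfc hconc hpos hsym hexp
    (div_neg_of_neg_of_pos hneg (by positivity))
  have hCf' : (f (L / 2) / |iteratedDeriv (2 * k) f (L / 2) / ((2 * k).factorial : ℝ)|)
      ^ (1 / ((2 * k : ℕ) : ℝ)) = Cf := by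
    rw [hCf, abs_div, abs_of_pos (show (0 : ℝ) < ((2 * k).factorial : ℝ) by positivity),
      div_div_eq_mul_div, mul_comm (f (L / 2))]
    push_cast
    rfl
  rw [hCf'] at hprof
  have hCf0 := hprof.A_pos
  set e : ℕ → ℝ := fun m => Cf * (m : ℝ) ^ (-(1 / (2 * k : ℝ))) with he
  have hepos : ∀ m : ℕ, 0 < m → 0 < e m := fun m hm => by
    have : (0 : ℝ) < m := by exact_mod_cast hm
    positivity
  have hepos' : ∀ᶠ m in atTop, 0 < e m := (eventually_gt_atTop 0).mono hepos
  have he0 : Tendsto e atTop (𝓝 0) := by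
    have := ((tendsto_rpow_neg_atTop (show (0 : ℝ) < 1 / (2 * k) by positivity)).comp
      tendsto_natCast_atTop_atTop).const_mul Cf
    rwa [mul_zero] at this
  have hscale : ∀ᶠ m : ℕ in atTop, m * e m ^ (2 * k) = Cf ^ (2 * k) := by
    filter_upwards [eventually_gt_atTop 0] with m hm
    have hmR : (0 : ℝ) < m := by exact_mod_cast hm
    have : ((m : ℝ) ^ (-(1 / (2 * k : ℝ)))) ^ (2 * k) = (m : ℝ)⁻¹ := by
      rw [← Real.rpow_mul_natCast hmR.le, ← Real.rpow_neg_one]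
      congr 1
      push_cast
      field_simp
    rw [he]
    simp only
    rw [mul_pow, this]
    field_simp
  have hlim : (0 < C2k) ∧ Tendsto (fun m =>
      (∫ a, (∫ b in Iic a, IsFlatProfile.weight (fun h => f (L / 2 + h) / f (L / 2))
          (L / 2) (e m) m b)
        * (∫ b in Iic (-a), IsFlatProfile.weight (fun h => f (L / 2 + h) / f (L / 2))
          (L / 2) (e m) m b)
        / IsFlatProfile.weight (fun h => f (L / 2 + h) / f (L / 2)) (L / 2) (e m) m a)
      / ∫ b, IsFlatProfile.weight (fun h => f (L / 2 + h) / f (L / 2)) (L / 2) (e m) m b)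
      atTop (𝓝 (2 * C2k / (Real.Gamma (1 / (2 * k : ℝ)) / k))) := by
    rw [← integral_exp_neg_even_pow hk0, hC2k]
    simp only [hh1]
    obtain ⟨p, hp⟩ : ∃ p, 2 * k = p + 1 := ⟨2 * k - 1, by omega⟩
    rw [hp] at hprof hscale ⊢
    have := hprof.tendsto_integral_weight (by omega) hepos' he0 hscale
    simpa only [Real.exp_neg (_ ^ _), div_inv_eq_mul] using this
  obtain ⟨hC2kpos, hlim⟩ := hlim
  have hΓ : 0 < Real.Gamma (1 / (2 * k : ℝ)) := Real.Gamma_pos_of_pos (by positivity)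
  have hT := (isEquivalent_const_iff_tendsto (by positivity)).2
    (hlim.comp (tendsto_sub_atTop_nat 1))
  refine (((isEquivalent_sq_mul_rpow_pred (A := Cf) hk0).mul hT).congr_left ?_).congr_right
    (Eventually.of_forall fun n => ?_)
  · filter_upwards [eventually_ge_atTop 2] with n hn
    rw [hE n hn, integral_exit_eq hL hfc hpos hsym (n - 1) (hepos (n - 1) (by omega)) (hI n) rfl]
    rfl
  · simp only [Pi.mul_apply, Function.const_apply]
    field_simp
end
end
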